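/- arXiv:math/0012230 — 2 statements merged into one kernel-verified Lean document; each statement's English description precedes it below -/
import Mathlib

section
/- For all n ≥ 1, the number of walks on the slit plane of length 2n ending at (−1,1) equals C_{2n}/2, and the number of walks on the slit plane of length 2n ending at (1,1) equals 4^{n−1}·Cₙ + C_{2n}/2, where Cₘ = binom(2m,m)/(m+1) is the m-th Catalan number. (Walks of odd length ending at these points do not exist.) -/
open Filter

/-- The forbidden half-line `H = {(k,0) : k ≤ 0}`. -/
def slitH : Set (ℤ × ℤ) := {p : ℤ × ℤ | p.2 = 0 ∧ p.1 ≤ 0}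

/-- The four steps of the ordinary square lattice. -/
def sqSteps : Set (ℤ × ℤ) := {(1,0), (-1,0), (0,1), (0,-1)}

/-- The four diagonal steps. -/
def diagSteps : Set (ℤ × ℤ) := {(1,1), (1,-1), (-1,1), (-1,-1)}

/-- `w : Fin (n+1) → ℤ × ℤ` is a walk on the slit plane with steps in `A`. -/
def IsSlitWalk (A : Set (ℤ × ℤ)) (n : ℕ) (w : Fin (n+1) → ℤ × ℤ) : Prop :=
  w 0 = (0,0) ∧ (∀ m : Fin n, w m.succ - w m.castSucc ∈ A) ∧
    ∀ m : Fin (n+1), 1 ≤ (m : ℕ) → w m ∉ slitH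

/-- `a_{i,j}(n)`: the number of walks on the slit plane of length `n` ending at `(i,j)`. -/
noncomputable def slitCount (A : Set (ℤ × ℤ)) (i j : ℤ) (n : ℕ) : ℕ :=
  Nat.card {w : Fin (n+1) → ℤ × ℤ // IsSlitWalk A n w ∧ w (Fin.last n) = (i, j)}

/-!
Let `Sⱼ(x; t)` be the generating function of the walks ending at ordinate `j`, where `t` (the power
series variable `X` in code) marks the length. The recurrence
`Sⱼ₊₁ = t ((x + x⁻¹) Sⱼ₊₁ + Sⱼ + Sⱼ₊₂)` for `j ≥ 0` conserves the quadratic form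
`t Sⱼ₊₁² - (1 - t (x + x⁻¹)) Sⱼ Sⱼ₊₁ + t Sⱼ²`, which is divisible by `tʲ` and hence vanishes. At
`j = 0` this gives `(1 - B)² = Δ S₀²`, where `Δ = (1 - t (x + x⁻¹))² - 4 t²` and
`1 - B = (1 - t (x + x⁻¹)) S₀ - 2 t S₁`. Only nonnegative powers of `x` occur in `S₀`, and only
nonpositive ones in `1 - B`. Since `Δ = q² Δ₊(x) Δ₊(x⁻¹)`, with `q` and `Δ₊` expressed through the
Catalan series `C(t)` and `C(-t)`, separating the powers of `x` gives `S₀² Δ₊(x) = 1` and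
`(1 - B)² = q² Δ₊(x⁻¹)`. The walks ending at `(-1, 1)` are read off the coefficient of `x⁻¹` in `B`,
those ending at `(1, 1)` off the coefficients of `x` and `x²` in `S₀`.
-/

namespace SlitPlane

section Walks

variable {A : Set (ℤ × ℤ)} {n : ℕ}

lemma isSlitWalk_succ_iff {w : Fin (n + 2) → ℤ × ℤ} :
    IsSlitWalk A (n + 1) w ↔ IsSlitWalk A n (Fin.init w) ∧
      w (Fin.last (n + 1)) - Fin.init w (Fin.last n) ∈ A ∧ w (Fin.last (n + 1)) ∉ slitH := by
  simp only [IsSlitWalk, Fin.forall_fin_succ' (n := n), Fin.forall_fin_succ' (n := n + 1), Fin.init,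
    Fin.castSucc_zero, Fin.succ_last, Fin.succ_castSucc, Fin.val_castSucc, Fin.val_last,
    Nat.le_add_left, forall_const]
  tauto

lemma isSlitWalk_zero_iff {w : Fin 1 → ℤ × ℤ} : IsSlitWalk A 0 w ↔ w = fun _ ↦ (0, 0) := by
  simp [IsSlitWalk, funext_iff, slitH]

lemma finite_setOf_isSlitWalk (hA : A.Finite) (n : ℕ) : {w | IsSlitWalk A n w}.Finite := by
  induction n with
  | zero =>
    exact (Set.finite_singleton fun _ ↦ (0, 0)).subset fun w ↦ isSlitWalk_zero_iff.1
  | succ n ih =>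
    refine (ih.image2 (fun w s ↦ Fin.snoc (α := fun _ ↦ ℤ × ℤ) w (w (Fin.last n) + s)) hA).subset
      fun w hw ↦ ?_
    obtain ⟨hinit, hstep, -⟩ := isSlitWalk_succ_iff.1 hw
    exact ⟨Fin.init w, hinit, _, hstep, by simp only [add_sub_cancel, Fin.snoc_init_self]⟩

/-- The walks counted by `slitCount A p.1 p.2 n`. -/
def slitWalksTo (A : Set (ℤ × ℤ)) (n : ℕ) (p : ℤ × ℤ) : Set (Fin (n + 1) → ℤ × ℤ) :=
  {w | IsSlitWalk A n w ∧ w (Fin.last n) = p}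

lemma slitCount_eq_ncard (A : Set (ℤ × ℤ)) (i j : ℤ) (n : ℕ) :
    slitCount A i j n = (slitWalksTo A n (i, j)).ncard :=
  Nat.card_coe_set_eq _

lemma slitWalksTo_succ {p : ℤ × ℤ} (hp : p ∉ slitH) :
    slitWalksTo A (n + 1) p =
      (Fin.snoc (α := fun _ ↦ ℤ × ℤ) · p) '' ⋃ s ∈ A, slitWalksTo A n (p - s) := by
  ext w
  simp only [slitWalksTo, Set.mem_ofPred_eq, Set.mem_image, Set.mem_iUnion, exists_prop]
  constructor
  · rintro ⟨hw, rfl⟩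
    obtain ⟨hinit, hstep, -⟩ := isSlitWalk_succ_iff.1 hw
    exact ⟨Fin.init w, ⟨_, hstep, hinit, by rw [sub_sub_cancel]⟩, Fin.snoc_init_self w⟩
  · rintro ⟨v, ⟨s, hs, hv, hlast⟩, rfl⟩
    rw [isSlitWalk_succ_iff, Fin.init_snoc, Fin.snoc_last, hlast, sub_sub_cancel]
    exact ⟨⟨hv, hs, hp⟩, rfl⟩

theorem slitCount_succ (A : Finset (ℤ × ℤ)) (n : ℕ) {i j : ℤ} (h : (i, j) ∉ slitH) :
    slitCount A i j (n + 1) = ∑ s ∈ A, slitCount A (i - s.1) (j - s.2) n := by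
  have hfin (p : ℤ × ℤ) : (slitWalksTo (A : Set (ℤ × ℤ)) n p).Finite :=
    (finite_setOf_isSlitWalk A.finite_toSet n).subset fun _ hw ↦ hw.1
  have hdisj : (A : Set (ℤ × ℤ)).PairwiseDisjoint fun s ↦ slitWalksTo A n ((i, j) - s) :=
    fun s _ t _ hst ↦ Set.disjoint_left.2 fun _ hs ht ↦
      hst (sub_right_injective (hs.2.symm.trans ht.2))
  rw [slitCount_eq_ncard, slitWalksTo_succ h,
    Set.ncard_image_of_injective _ (Fin.snoc_left_injective (α := fun _ ↦ ℤ × ℤ) _),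
    A.finite_toSet.ncard_biUnion (fun _ _ ↦ hfin _) hdisj, finsum_mem_coe_finset]
  exact Finset.sum_congr rfl fun s _ ↦ (slitCount_eq_ncard _ _ _ _).symm

lemma slitCount_zero (A : Set (ℤ × ℤ)) (i j : ℤ) :
    slitCount A i j 0 = if i = 0 ∧ j = 0 then 1 else 0 := by
  have hwalks : slitWalksTo A 0 (i, j) = if i = 0 ∧ j = 0 then {fun _ ↦ (0, 0)} else ∅ := by
    ext w
    split_ifs <;> simp [slitWalksTo, isSlitWalk_zero_iff] <;> grind
  rw [slitCount_eq_ncard, hwalks]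
  split_ifs <;> simp

lemma slitCount_eq_zero {i j : ℤ} (h : ∀ w, IsSlitWalk A n w → w (Fin.last n) ≠ (i, j)) :
    slitCount A i j n = 0 := by
  have hempty : slitWalksTo A n (i, j) = ∅ := Set.eq_empty_of_forall_notMem fun w hw ↦ h w hw.1 hw.2
  rw [slitCount_eq_ncard, hempty, Set.ncard_empty]

lemma slitCount_succ_eq_zero {i j : ℤ} (h : (i, j) ∈ slitH) : slitCount A i j (n + 1) = 0 :=
  slitCount_eq_zero fun _ hw hlast ↦ (isSlitWalk_succ_iff.1 hw).2.2 (hlast ▸ h)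

lemma finite_support_slitCount (hA : A.Finite) (j : ℤ) (n : ℕ) :
    (Function.support fun i ↦ slitCount A i j n).Finite := by
  refine ((finite_setOf_isSlitWalk hA n).image fun w ↦ (w (Fin.last n)).1).subset fun i hi ↦ ?_
  by_contra hnot
  exact hi (slitCount_eq_zero fun w hw hlast ↦ hnot ⟨w, hw, congrArg Prod.fst hlast⟩)

theorem slitCount_eq_zero_of_invariant {P : ℕ → ℤ × ℤ → Prop} (hzero : P 0 (0, 0))
    (hstep : ∀ m p, ∀ s ∈ A, P m p → P (m + 1) (p + s)) {i j : ℤ} (h : ¬ P n (i, j)) :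
    slitCount A i j n = 0 := by
  have hP (m : ℕ) (w : Fin (m + 1) → ℤ × ℤ) (hw : IsSlitWalk A m w) : P m (w (Fin.last m)) := by
    induction m with
    | zero => rwa [isSlitWalk_zero_iff.1 hw]
    | succ m ih =>
      obtain ⟨hinit, hlast, -⟩ := isSlitWalk_succ_iff.1 hw
      simpa only [add_sub_cancel] using hstep m _ _ hlast (ih _ hinit)
  exact slitCount_eq_zero fun w hw hlast ↦ h (hlast ▸ hP n w hw)

end Walks

section SquareLattice

lemma slitCount_sqSteps_succ (i j : ℤ) (n : ℕ) : slitCount sqSteps i j (n + 1) =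
    if j = 0 ∧ i ≤ 0 then 0 else
      slitCount sqSteps (i - 1) j n + slitCount sqSteps (i + 1) j n +
        slitCount sqSteps i (j - 1) n + slitCount sqSteps i (j + 1) n := by
  have hA : sqSteps = (({(1, 0), (-1, 0), (0, 1), (0, -1)} : Finset (ℤ × ℤ)) : Set (ℤ × ℤ)) := by
    simp [sqSteps]
  split_ifs with h
  · exact slitCount_succ_eq_zero h
  · rw [hA, slitCount_succ _ _ h]
    simp [add_assoc]

lemma slitCount_sqSteps_neg (i j : ℤ) (n : ℕ) :
    slitCount sqSteps i (-j) n = slitCount sqSteps i j n := by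
  induction n generalizing i j with
  | zero => simp only [slitCount_zero, neg_eq_zero]
  | succ n ih =>
    have hup : slitCount sqSteps i (-j + 1) n = slitCount sqSteps i (j - 1) n := by
      rw [← ih i (j - 1), neg_sub, sub_eq_neg_add]
    have hdown : slitCount sqSteps i (-j - 1) n = slitCount sqSteps i (j + 1) n := by
      rw [← ih i (j + 1), neg_add, sub_eq_add_neg]
    simp only [slitCount_sqSteps_succ, neg_eq_zero, ih, hup, hdown, add_right_comm]

lemma slitCount_sqSteps_eq_zero_of_odd {i j : ℤ} {n : ℕ} (h : Odd (i + j + n)) :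
    slitCount sqSteps i j n = 0 := by
  refine slitCount_eq_zero_of_invariant (P := fun m p ↦ Even (p.1 + p.2 + m)) (by simp) ?_
    (Int.not_even_iff_odd.2 h)
  rintro m ⟨x, y⟩ s (rfl | rfl | rfl | rfl) <;> simp <;> grind

lemma slitCount_sqSteps_eq_zero_of_lt {i j : ℤ} {n : ℕ} (h : n < j) :
    slitCount sqSteps i j n = 0 := by
  refine slitCount_eq_zero_of_invariant (P := fun m p ↦ p.2 ≤ m) le_rfl ?_ (not_le.2 h)
  rintro m ⟨x, y⟩ s (rfl | rfl | rfl | rfl) <;> simp <;> omega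

lemma finite_sqSteps : sqSteps.Finite := by
  simp only [sqSteps, Set.finite_insert, Set.finite_singleton]

end SquareLattice

open scoped Polynomial LaurentPolynomial PowerSeries
open Polynomial (toLaurent)
open LaurentPolynomial (T invert trunc)
open PowerSeries (X coeff constantCoeff)

section LaurentCoefficients

variable {R : Type*}

section Semiring

variable [Semiring R]

lemma coeff_mul_T (f : R[T;T⁻¹]) (m i : ℤ) : (f * T m).coeff i = f.coeff (i - m) := by
  rw [T, sub_eq_add_neg, AddMonoidAlgebra.coeff_mul_single_apply, mul_one]

lemma coeff_toLaurent_natCast (f : R[X]) (k : ℕ) : (toLaurent f).coeff k = f.coeff k :=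
  Finsupp.mapDomain_apply Nat.cast_injective _ k

lemma coeff_toLaurent_of_neg (f : R[X]) {i : ℤ} (hi : i < 0) : (toLaurent f).coeff i = 0 :=
  Finsupp.mapDomain_of_notMem_range _ _ (by rintro ⟨k, rfl⟩; simp at hi; omega)

lemma coeff_trunc (f : R[T;T⁻¹]) (k : ℕ) : (trunc f).coeff k = f.coeff k := rfl

/-- The coefficient of `xⁱ` in a power series in `t` whose coefficients are Laurent polynomials
in `x`. -/
noncomputable def laurentCoeff (i : ℤ) : R[T;T⁻¹]⟦X⟧ →+ R⟦X⟧ where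
  toFun F := PowerSeries.mk fun n ↦ (coeff n F).coeff i
  map_zero' := by ext; simp
  map_add' F G := by ext; simp

lemma coeff_laurentCoeff (i : ℤ) (n : ℕ) (F : R[T;T⁻¹]⟦X⟧) :
    coeff n (laurentCoeff i F) = (coeff n F).coeff i := by
  simp [laurentCoeff]

lemma ext_laurentCoeff {F G : R[T;T⁻¹]⟦X⟧} (h : ∀ i, laurentCoeff i F = laurentCoeff i G) :
    F = G := by
  ext n i
  simpa only [coeff_laurentCoeff] using congrArg (coeff n) (h i)

lemma laurentCoeff_X_mul (i : ℤ) (F : R[T;T⁻¹]⟦X⟧) :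
    laurentCoeff i (X * F) = X * laurentCoeff i F := by
  ext (_ | n) <;> simp [coeff_laurentCoeff, PowerSeries.coeff_succ_X_mul]

lemma laurentCoeff_mul_C_T (i m : ℤ) (F : R[T;T⁻¹]⟦X⟧) :
    laurentCoeff i (F * PowerSeries.C (T m)) = laurentCoeff (i - m) F := by
  ext n
  simp only [coeff_laurentCoeff, PowerSeries.coeff_mul_C, coeff_mul_T]

/-- The coefficient of `xᵏ` in a power series in `t` whose coefficients are polynomials in `x`. -/
noncomputable def xCoeff (k : ℕ) : R[X]⟦X⟧ →+ R⟦X⟧ where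
  toFun f := PowerSeries.mk fun n ↦ (coeff n f).coeff k
  map_zero' := by ext; simp
  map_add' f g := by ext; simp

lemma coeff_xCoeff (k n : ℕ) (f : R[X]⟦X⟧) : coeff n (xCoeff k f) = (coeff n f).coeff k := by
  simp [xCoeff]

lemma ext_xCoeff {f g : R[X]⟦X⟧} (h : ∀ k, xCoeff k f = xCoeff k g) : f = g := by
  ext n k
  simpa only [coeff_xCoeff] using congrArg (coeff n) (h k)

lemma xCoeff_mul (k : ℕ) (f g : R[X]⟦X⟧) :
    xCoeff k (f * g) =
      ∑ x ∈ Finset.HasAntidiagonal.antidiagonal k, xCoeff x.1 f * xCoeff x.2 g := by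
  ext n
  simp only [coeff_xCoeff, PowerSeries.coeff_mul, map_sum, Polynomial.finsetSum_coeff,
    Polynomial.coeff_mul]
  exact Finset.sum_comm

lemma xCoeff_map_C (k : ℕ) (f : R⟦X⟧) :
    xCoeff k (PowerSeries.map Polynomial.C f) = if k = 0 then f else 0 := by
  ext n
  rw [coeff_xCoeff, PowerSeries.coeff_map, Polynomial.coeff_C]
  split_ifs <;> simp

lemma xCoeff_C_X (k : ℕ) :
    xCoeff k (PowerSeries.C Polynomial.X : R[X]⟦X⟧) = if k = 1 then 1 else 0 := by
  ext n
  rw [coeff_xCoeff, PowerSeries.coeff_C]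
  split_ifs <;> simp_all [PowerSeries.coeff_one, Polynomial.coeff_X, eq_comm]

lemma laurentCoeff_map_toLaurent (k : ℕ) (f : R[X]⟦X⟧) :
    laurentCoeff k (PowerSeries.map toLaurent f) = xCoeff k f := by
  ext n
  rw [coeff_laurentCoeff, PowerSeries.coeff_map, coeff_toLaurent_natCast, coeff_xCoeff]

lemma laurentCoeff_map_toLaurent_of_neg {i : ℤ} (hi : i < 0) (f : R[X]⟦X⟧) :
    laurentCoeff i (PowerSeries.map toLaurent f) = 0 := by
  ext n
  rw [coeff_laurentCoeff, PowerSeries.coeff_map, coeff_toLaurent_of_neg _ hi, map_zero]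

/-- The part of nonnegative degree in `x` of a power series in `t` whose coefficients are Laurent
polynomials in `x`. -/
noncomputable def polynomialPart (F : R[T;T⁻¹]⟦X⟧) : R[X]⟦X⟧ :=
  PowerSeries.mk fun n ↦ trunc (coeff n F)

lemma xCoeff_polynomialPart (k : ℕ) (F : R[T;T⁻¹]⟦X⟧) :
    xCoeff k (polynomialPart F) = laurentCoeff k F := by
  ext n
  rw [coeff_xCoeff, polynomialPart, PowerSeries.coeff_mk, coeff_trunc, coeff_laurentCoeff]

lemma map_toLaurent_polynomialPart {F : R[T;T⁻¹]⟦X⟧} (hF : ∀ i < 0, laurentCoeff i F = 0) :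
    PowerSeries.map toLaurent (polynomialPart F) = F := by
  refine ext_laurentCoeff fun i ↦ ?_
  rcases lt_or_ge i 0 with hi | hi
  · rw [laurentCoeff_map_toLaurent_of_neg hi, hF i hi]
  · lift i to ℕ using hi
    rw [laurentCoeff_map_toLaurent, xCoeff_polynomialPart]

end Semiring

section CommSemiring

variable [CommSemiring R]

/-- The substitution `x ↦ x⁻¹` in a power series in `t` whose coefficients are Laurent polynomials
in `x`. -/
noncomputable def invertX : R[T;T⁻¹]⟦X⟧ →+* R[T;T⁻¹]⟦X⟧ :=
  PowerSeries.map (invert (R := R) : R[T;T⁻¹] →+* R[T;T⁻¹])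

lemma laurentCoeff_invertX (i : ℤ) (F : R[T;T⁻¹]⟦X⟧) :
    laurentCoeff i (invertX F) = laurentCoeff (-i) F := by
  ext n
  simp [coeff_laurentCoeff, invertX]

lemma invertX_invertX (F : R[T;T⁻¹]⟦X⟧) : invertX (invertX F) = F :=
  ext_laurentCoeff fun i ↦ by rw [laurentCoeff_invertX, laurentCoeff_invertX, neg_neg]

lemma invertX_map_toLaurent_polynomialPart {F : R[T;T⁻¹]⟦X⟧}
    (hF : ∀ i > 0, laurentCoeff i F = 0) :
    invertX (PowerSeries.map toLaurent (polynomialPart (invertX F))) = F := by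
  rw [map_toLaurent_polynomialPart, invertX_invertX]
  intro i hi
  rw [laurentCoeff_invertX, hF _ (neg_pos.2 hi)]

theorem eq_map_C_of_map_toLaurent_eq {f g : R[X]⟦X⟧}
    (h : PowerSeries.map toLaurent f = invertX (PowerSeries.map toLaurent g)) :
    f = PowerSeries.map Polynomial.C (xCoeff 0 f) ∧
      g = PowerSeries.map Polynomial.C (xCoeff 0 f) := by
  have hcoeff (i : ℤ) : laurentCoeff i (PowerSeries.map toLaurent f) =
      laurentCoeff (-i) (PowerSeries.map toLaurent g) := by
    rw [h, laurentCoeff_invertX]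
  have hzero : xCoeff 0 f = xCoeff 0 g := by
    simpa only [← laurentCoeff_map_toLaurent, Nat.cast_zero, neg_zero] using hcoeff 0
  constructor <;> refine ext_xCoeff fun k ↦ ?_ <;> rw [xCoeff_map_C] <;> split_ifs with hk
  · rw [hk]
  · rw [← laurentCoeff_map_toLaurent, hcoeff, laurentCoeff_map_toLaurent_of_neg (by omega)]
  · rw [hk, hzero]
  · rw [← laurentCoeff_map_toLaurent, ← neg_neg (k : ℤ), ← hcoeff,
      laurentCoeff_map_toLaurent_of_neg (by omega)]

theorem eq_map_C_of_map_toLaurent_mul_eq {f d g : R[X]⟦X⟧} (hd : IsUnit d)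
    (h : PowerSeries.map toLaurent f * invertX (PowerSeries.map toLaurent d) =
      invertX (PowerSeries.map toLaurent g)) :
    f = PowerSeries.map Polynomial.C (xCoeff 0 f) ∧
      g = PowerSeries.map Polynomial.C (xCoeff 0 f) * d := by
  obtain ⟨e, hde⟩ := hd.exists_right_inv
  have hfge : PowerSeries.map toLaurent f = invertX (PowerSeries.map toLaurent (g * e)) := by
    simp only [map_mul, ← h]
    rw [mul_assoc, ← map_mul, ← map_mul, hde, map_one, map_one, mul_one]
  obtain ⟨hf, hge⟩ := eq_map_C_of_map_toLaurent_eq hfge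
  refine ⟨hf, ?_⟩
  rw [← hge, mul_assoc, mul_comm e, hde, mul_one]

end CommSemiring

end LaurentCoefficients

section CatalanSeries

variable {R : Type*}

/-- The series `C(at) = ∑ₙ aⁿ Cₙ tⁿ`, where `C` is the generating function of the Catalan
numbers. -/
noncomputable def catalanRescaled [CommSemiring R] (a : R) : R⟦X⟧ :=
  PowerSeries.rescale a (PowerSeries.map (Nat.castRingHom R) PowerSeries.catalanSeries)

lemma coeff_catalanRescaled [CommSemiring R] (a : R) (n : ℕ) :
    coeff n (catalanRescaled a) = a ^ n * catalan n := by
  simp [catalanRescaled, PowerSeries.coeff_rescale]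

lemma constantCoeff_catalanRescaled [CommSemiring R] (a : R) :
    constantCoeff (catalanRescaled a) = 1 := by
  rw [← PowerSeries.coeff_zero_eq_constantCoeff_apply, coeff_catalanRescaled]
  simp

lemma catalanRescaled_eq [CommRing R] (a : R) :
    catalanRescaled a = 1 + PowerSeries.C a * X * catalanRescaled a ^ 2 := by
  have h := congrArg (PowerSeries.rescale a ∘ PowerSeries.map (Nat.castRingHom R))
    PowerSeries.catalanSeries_sq_mul_X_add_one
  simp only [Function.comp_apply, map_add, map_mul, map_pow, map_one, PowerSeries.map_X,
    PowerSeries.rescale_X] at h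
  rw [catalanRescaled]
  linear_combination -h

lemma eq_of_sq_eq_sq_of_constantCoeff_add_ne_zero [CommRing R] [IsDomain R]
    {f g : R⟦X⟧} (h : f ^ 2 = g ^ 2) (hne : constantCoeff f + constantCoeff g ≠ 0) : f = g := by
  refine (sq_eq_sq_iff_eq_or_eq_neg.1 h).resolve_right fun hneg ↦ hne ?_
  rw [hneg, map_neg, neg_add_cancel]

end CatalanSeries

local notation "c₊" => catalanRescaled (1 : ℤ)
local notation "c₋" => catalanRescaled (-1 : ℤ)

/-- The series `C(4t²)`. -/
noncomputable def catalanFourSq : ℤ⟦X⟧ :=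
  PowerSeries.expand 2 two_ne_zero (catalanRescaled 4)

lemma coeff_two_mul_catalanFourSq (n : ℕ) :
    coeff (2 * n) catalanFourSq = 4 ^ n * catalan n := by
  rw [catalanFourSq, PowerSeries.coeff_expand_mul, coeff_catalanRescaled]

lemma catalanFourSq_eq : catalanFourSq = 1 + 4 * X ^ 2 * catalanFourSq ^ 2 := by
  have h := congrArg (PowerSeries.expand 2 two_ne_zero) (catalanRescaled_eq (4 : ℤ))
  simpa only [catalanFourSq, map_add, map_mul, map_pow, map_one, PowerSeries.expand_X,
    PowerSeries.expand_C, map_ofNat] using h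

lemma catalanRescaled_one_eq : c₊ = 1 + X * c₊ ^ 2 := by
  simpa only [map_one, one_mul] using catalanRescaled_eq (1 : ℤ)

lemma catalanRescaled_neg_one_eq : c₋ = 1 - X * c₋ ^ 2 := by
  simpa only [map_neg, map_one, neg_mul, one_mul, ← sub_eq_add_neg] using
    catalanRescaled_eq (-1 : ℤ)

lemma eight_mul_X_sq_mul_catalanFourSq :
    8 * X ^ 2 * catalanFourSq = 2 * X * (c₊ - c₋) + 4 * X ^ 2 * c₊ * c₋ := by
  -- Both sides are square roots of `1 - 16t²`.
  have h : 1 - 8 * X ^ 2 * catalanFourSq = (1 - 2 * X * c₊) * (1 + 2 * X * c₋) := by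
    have hpos : (1 - 2 * X * c₊) ^ 2 = 1 - 4 * X := by
      linear_combination (-4 * X) * catalanRescaled_one_eq
    have hneg : (1 + 2 * X * c₋) ^ 2 = 1 + 4 * X := by
      linear_combination (4 * X) * catalanRescaled_neg_one_eq
    refine eq_of_sq_eq_sq_of_constantCoeff_add_ne_zero ?_ (by simp)
    rw [mul_pow, hpos, hneg]
    linear_combination (-16 * X ^ 2) * catalanFourSq_eq
  linear_combination -h

section Quadratic

variable {R : Type*} [CommRing R]

lemma xCoeff_one (k : ℕ) : xCoeff k (1 : R[X]⟦X⟧) = if k = 0 then 1 else 0 := by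
  rw [← map_one (PowerSeries.map Polynomial.C), xCoeff_map_C]

lemma xCoeff_zero_mul (f g : R[X]⟦X⟧) : xCoeff 0 (f * g) = xCoeff 0 f * xCoeff 0 g := by
  simp [xCoeff_mul]

lemma xCoeff_one_mul (f g : R[X]⟦X⟧) :
    xCoeff 1 (f * g) = xCoeff 0 f * xCoeff 1 g + xCoeff 1 f * xCoeff 0 g := by
  simp [xCoeff_mul, Finset.Nat.antidiagonal_succ]

lemma xCoeff_two_mul (f g : R[X]⟦X⟧) : xCoeff 2 (f * g) =
    xCoeff 0 f * xCoeff 2 g + xCoeff 1 f * xCoeff 1 g + xCoeff 2 f * xCoeff 0 g := by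
  simp [xCoeff_mul, Finset.Nat.antidiagonal_succ, add_assoc]

/-- The polynomial `(1 - a x) (1 - b x)` in `x`, for power series `a` and `b` in `t`. -/
noncomputable def quadratic (a b : R⟦X⟧) : R[X]⟦X⟧ :=
  (1 - PowerSeries.map Polynomial.C a * PowerSeries.C Polynomial.X) *
    (1 - PowerSeries.map Polynomial.C b * PowerSeries.C Polynomial.X)

variable {a b q : R⟦X⟧} {f : R[X]⟦X⟧}

lemma xCoeff_zero_quadratic : xCoeff 0 (quadratic a b) = 1 := by
  simp [quadratic, xCoeff_zero_mul, xCoeff_one, xCoeff_map_C, xCoeff_C_X]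

lemma xCoeff_one_quadratic : xCoeff 1 (quadratic a b) = -(a + b) := by
  simp [quadratic, xCoeff_zero_mul, xCoeff_one_mul, xCoeff_one, xCoeff_map_C, xCoeff_C_X]

lemma xCoeff_two_quadratic : xCoeff 2 (quadratic a b) = a * b := by
  simp [quadratic, xCoeff_zero_mul, xCoeff_one_mul, xCoeff_two_mul, xCoeff_one, xCoeff_map_C,
    xCoeff_C_X]

lemma isUnit_quadratic (ha : constantCoeff a = 0) (hb : constantCoeff b = 0) :
    IsUnit (quadratic a b) := by
  rw [PowerSeries.isUnit_iff_constantCoeff, quadratic]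
  have hmap (g : R⟦X⟧) : constantCoeff (PowerSeries.map Polynomial.C g) =
      Polynomial.C (constantCoeff g) := by
    simp only [← PowerSeries.coeff_zero_eq_constantCoeff_apply, PowerSeries.coeff_map]
  simp [hmap, ha, hb]

lemma map_toLaurent_map_C (a : R⟦X⟧) : PowerSeries.map toLaurent (PowerSeries.map Polynomial.C a) =
    PowerSeries.map LaurentPolynomial.C a := by
  ext1 n
  simp

lemma invertX_map_C (a : R⟦X⟧) : invertX (PowerSeries.map LaurentPolynomial.C a) =
    PowerSeries.map LaurentPolynomial.C a := by
  ext1 n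
  simp [invertX]

lemma map_toLaurent_quadratic : PowerSeries.map toLaurent (quadratic a b) =
    (1 - PowerSeries.map LaurentPolynomial.C a * PowerSeries.C (T 1)) *
      (1 - PowerSeries.map LaurentPolynomial.C b * PowerSeries.C (T 1)) := by
  simp only [quadratic, map_mul, map_sub, map_one, map_toLaurent_map_C, PowerSeries.map_C,
    Polynomial.toLaurent_X]

lemma invertX_map_toLaurent_quadratic : invertX (PowerSeries.map toLaurent (quadratic a b)) =
    (1 - PowerSeries.map LaurentPolynomial.C a * PowerSeries.C (T (-1))) *
      (1 - PowerSeries.map LaurentPolynomial.C b * PowerSeries.C (T (-1))) := by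
  have hT : invertX (PowerSeries.C (T 1 : R[T;T⁻¹])) = PowerSeries.C (T (-1)) := by
    simp [invertX]
  simp only [map_toLaurent_quadratic, map_mul, map_sub, map_one, invertX_map_C, hT]

lemma two_mul_xCoeff_one_of_sq_mul_quadratic_eq_one (hf : xCoeff 0 f = 1)
    (h : f ^ 2 * quadratic a b = 1) : 2 * xCoeff 1 f = a + b := by
  have hone := congrArg (xCoeff 1) h
  simp only [sq, xCoeff_zero_mul, xCoeff_one_mul, hf, xCoeff_zero_quadratic, xCoeff_one_quadratic,
    xCoeff_one, one_ne_zero, if_false] at hone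
  linear_combination hone

lemma two_mul_xCoeff_two_of_sq_mul_quadratic_eq_one (hf : xCoeff 0 f = 1)
    (h : f ^ 2 * quadratic a b = 1) : 2 * xCoeff 2 f = 3 * xCoeff 1 f ^ 2 - a * b := by
  have hone := two_mul_xCoeff_one_of_sq_mul_quadratic_eq_one hf h
  have htwo := congrArg (xCoeff 2) h
  simp only [sq, xCoeff_zero_mul, xCoeff_one_mul, xCoeff_two_mul, hf, xCoeff_zero_quadratic,
    xCoeff_one_quadratic, xCoeff_two_quadratic, xCoeff_one, two_ne_zero, if_false] at htwo
  linear_combination htwo - 2 * xCoeff 1 f * hone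

lemma two_mul_xCoeff_one_of_sq_eq [IsDomain R] (hq : q ≠ 0) (hf : xCoeff 0 f = q)
    (h : f ^ 2 = PowerSeries.map Polynomial.C q ^ 2 * quadratic a b) :
    2 * xCoeff 1 f = -(q * (a + b)) := by
  have hone := congrArg (xCoeff 1) h
  simp only [sq, xCoeff_zero_mul, xCoeff_one_mul, hf, xCoeff_zero_quadratic, xCoeff_one_quadratic,
    xCoeff_map_C, one_ne_zero, if_true, if_false] at hone
  refine mul_left_cancel₀ hq ?_
  linear_combination hone

end Quadratic

section Factorization

variable {A : Type*} [CommRing A] {t c d x y : A}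

lemma one_sub_mul_add_inv_eq (hxy : x * y = 1) (hc : c = 1 + t * c ^ 2) :
    1 - 2 * t - t * (x + y) = (1 - t * c) ^ 2 * ((1 - (c - 1) * x) * (1 - (c - 1) * y)) := by
  have hinv : (1 - t * c) * c = 1 := by linear_combination hc
  have hprod : (1 - (c - 1) * x) * (1 - (c - 1) * y) = c ^ 2 * (1 - 2 * t - t * (x + y)) := by
    linear_combination (c - 1) ^ 2 * hxy - (2 + (x + y)) * hc
  rw [hprod, ← mul_assoc, ← mul_pow, hinv, one_pow, one_mul]

lemma kernel_eq_mul (hxy : x * y = 1) (hc : c = 1 + t * c ^ 2) (hd : d = 1 - t * d ^ 2) :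
    (1 - t * (x + y)) ^ 2 - 4 * t ^ 2 = ((1 - t * c) * (1 + t * d)) ^ 2 *
      ((1 - (c - 1) * x) * (1 - (1 - d) * x)) * ((1 - (c - 1) * y) * (1 - (1 - d) * y)) := by
  have hneg := one_sub_mul_add_inv_eq (t := -t) (c := d) (x := -x) (y := -y)
    (by linear_combination hxy) (by linear_combination hd)
  calc (1 - t * (x + y)) ^ 2 - 4 * t ^ 2
      = (1 - 2 * t - t * (x + y)) * (1 - 2 * -t - -t * (-x + -y)) := by ring
    _ = _ := by rw [one_sub_mul_add_inv_eq hxy hc, hneg]; ring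

end Factorization

section ConservedQuantity

variable {R : Type*} [CommRing R] {F : ℕ → R⟦X⟧} {u : R⟦X⟧}

/-- The quadratic form in `F j` and `F (j + 1)` that the recurrence
`F (j + 1) = X * (u * F (j + 1) + F j + F (j + 2))` leaves constant in `j`. -/
noncomputable def conservedQuantity (u : R⟦X⟧) (F : ℕ → R⟦X⟧) (j : ℕ) : R⟦X⟧ :=
  X * F (j + 1) ^ 2 - (1 - X * u) * F j * F (j + 1) + X * F j ^ 2

lemma conservedQuantity_eq (hF : ∀ j, F (j + 1) = X * (u * F (j + 1) + F j + F (j + 2))) (j : ℕ) :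
    conservedQuantity u F j = conservedQuantity u F 0 := by
  induction j with
  | zero => rfl
  | succ j ih =>
    rw [← ih, conservedQuantity, conservedQuantity]
    linear_combination (F j - F (j + 2)) * hF j

lemma X_pow_dvd_conservedQuantity (u : R⟦X⟧) (hdvd : ∀ j, X ^ j ∣ F j) (j : ℕ) :
    X ^ j ∣ conservedQuantity u F j := by
  have hsucc : X ^ j ∣ F (j + 1) := (pow_dvd_pow X j.le_succ).trans (hdvd _)
  exact (((hsucc.pow two_ne_zero).mul_left _).sub (hsucc.mul_left _)).add
    (((hdvd j).pow two_ne_zero).mul_left _)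

lemma conservedQuantity_zero_eq_zero
    (hF : ∀ j, F (j + 1) = X * (u * F (j + 1) + F j + F (j + 2))) (hdvd : ∀ j, X ^ j ∣ F j) :
    conservedQuantity u F 0 = 0 := by
  ext n
  have hpow := X_pow_dvd_conservedQuantity u hdvd (n + 1)
  rw [conservedQuantity_eq hF] at hpow
  exact PowerSeries.X_pow_dvd_iff.1 hpow n n.lt_succ_self

theorem sq_sub_two_X_mul_eq
    (hF : ∀ j, F (j + 1) = X * (u * F (j + 1) + F j + F (j + 2))) (hdvd : ∀ j, X ^ j ∣ F j) :
    ((1 - X * u) * F 0 - 2 * X * F 1) ^ 2 = ((1 - X * u) ^ 2 - 4 * X ^ 2) * F 0 ^ 2 := by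
  have h := conservedQuantity_zero_eq_zero hF hdvd
  rw [conservedQuantity] at h
  linear_combination 4 * X * h

end ConservedQuantity

section SlitSeries

/-- The generating function in `t` of the square lattice walks on the slit plane ending at
`(i, j)`. -/
noncomputable def slitSeries (i j : ℤ) : ℤ⟦X⟧ :=
  PowerSeries.mk fun n ↦ slitCount sqSteps i j n

lemma coeff_slitSeries (i j : ℤ) (n : ℕ) :
    coeff n (slitSeries i j) = slitCount sqSteps i j n := by
  rw [slitSeries, PowerSeries.coeff_mk]

lemma slitSeries_neg (i j : ℤ) : slitSeries i (-j) = slitSeries i j := by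
  ext n
  simp only [coeff_slitSeries, slitCount_sqSteps_neg]

lemma slitSeries_of_nonpos {i : ℤ} (hi : i ≤ 0) : slitSeries i 0 = if i = 0 then 1 else 0 := by
  ext (_ | n) <;> rw [coeff_slitSeries]
  · rw [slitCount_zero]
    split_ifs <;> simp_all
  · rw [slitCount_sqSteps_succ, if_pos ⟨rfl, hi⟩]
    split_ifs <;> simp [PowerSeries.coeff_one]

lemma slitSeries_eq {i j : ℤ} (h : j = 0 → 0 < i) : slitSeries i j =
    X * (slitSeries (i - 1) j + slitSeries (i + 1) j + slitSeries i (j - 1) +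
      slitSeries i (j + 1)) := by
  ext (_ | n)
  · rw [coeff_slitSeries, slitCount_zero, if_neg (by omega)]
    simp
  · simp only [PowerSeries.coeff_succ_X_mul, map_add, coeff_slitSeries]
    rw [slitCount_sqSteps_succ, if_neg (by omega)]
    push_cast
    rfl

/-- The generating function of the walks ending at ordinate `j`, in which `x` marks the abscissa
of the endpoint. -/
noncomputable def rowSeries (j : ℤ) : ℤ[T;T⁻¹]⟦X⟧ :=
  PowerSeries.mk fun n ↦ AddMonoidAlgebra.ofCoeff
    ((Finsupp.ofSupportFinite _ (finite_support_slitCount finite_sqSteps j n)).mapRange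
      ((↑) : ℕ → ℤ) Nat.cast_zero)

lemma laurentCoeff_rowSeries (i j : ℤ) : laurentCoeff i (rowSeries j) = slitSeries i j := by
  ext n
  rw [coeff_laurentCoeff, rowSeries, PowerSeries.coeff_mk, coeff_slitSeries]
  rfl

/-- The Laurent polynomial `x + x⁻¹` of the horizontal steps, as a series constant in `t`. -/
noncomputable def horizontalSteps : ℤ[T;T⁻¹]⟦X⟧ :=
  PowerSeries.C (T 1) + PowerSeries.C (T (-1))

lemma laurentCoeff_horizontalSteps_mul (i : ℤ) (F : ℤ[T;T⁻¹]⟦X⟧) :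
    laurentCoeff i (horizontalSteps * F) = laurentCoeff (i - 1) F + laurentCoeff (i + 1) F := by
  rw [horizontalSteps, mul_comm, mul_add, map_add, laurentCoeff_mul_C_T, laurentCoeff_mul_C_T,
    sub_neg_eq_add]

lemma rowSeries_eq {j : ℤ} (hj : j ≠ 0) :
    rowSeries j = X * (horizontalSteps * rowSeries j + rowSeries (j - 1) + rowSeries (j + 1)) := by
  refine ext_laurentCoeff fun i ↦ ?_
  simp only [laurentCoeff_X_mul, map_add, laurentCoeff_horizontalSteps_mul, laurentCoeff_rowSeries]
  exact slitSeries_eq fun h ↦ absurd h hj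

lemma X_pow_dvd_rowSeries (j : ℕ) : X ^ j ∣ rowSeries j := by
  refine PowerSeries.X_pow_dvd_iff.2 fun n hn ↦ ?_
  ext i
  rw [← coeff_laurentCoeff, laurentCoeff_rowSeries, coeff_slitSeries,
    slitCount_sqSteps_eq_zero_of_lt (by exact_mod_cast hn)]
  rfl

/-- The series `1 - B`, where `B` counts the walks that stay in the slit plane except that their
last step hits the half-line. -/
noncomputable def boundarySeries : ℤ[T;T⁻¹]⟦X⟧ :=
  (1 - X * horizontalSteps) * rowSeries 0 - 2 * X * rowSeries 1

lemma laurentCoeff_boundarySeries (i : ℤ) : laurentCoeff i boundarySeries =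
    slitSeries i 0 - X * (slitSeries (i - 1) 0 + slitSeries (i + 1) 0 + 2 * slitSeries i 1) := by
  have hexpand : boundarySeries =
      rowSeries 0 - X * (horizontalSteps * rowSeries 0 + (rowSeries 1 + rowSeries 1)) := by
    rw [boundarySeries]
    ring
  simp only [hexpand, map_sub, laurentCoeff_X_mul, map_add, laurentCoeff_horizontalSteps_mul,
    laurentCoeff_rowSeries, two_mul]

lemma slitSeries_zero_right_eq {i : ℤ} (hi : 0 < i) : slitSeries i 0 =
    X * (slitSeries (i - 1) 0 + slitSeries (i + 1) 0 + 2 * slitSeries i 1) := by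
  have h := slitSeries_eq (i := i) (j := 0) fun _ ↦ hi
  rwa [zero_sub, slitSeries_neg, zero_add, add_assoc _ (slitSeries i 1), ← two_mul] at h

lemma laurentCoeff_boundarySeries_of_pos {i : ℤ} (hi : 0 < i) :
    laurentCoeff i boundarySeries = 0 := by
  rw [laurentCoeff_boundarySeries, ← slitSeries_zero_right_eq hi, sub_self]

lemma laurentCoeff_rowSeries_zero_of_neg {i : ℤ} (hi : i < 0) :
    laurentCoeff i (rowSeries 0) = 0 := by
  rw [laurentCoeff_rowSeries, slitSeries_of_nonpos hi.le, if_neg hi.ne]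

theorem boundarySeries_sq :
    boundarySeries ^ 2 = ((1 - X * horizontalSteps) ^ 2 - 4 * X ^ 2) * rowSeries 0 ^ 2 := by
  refine sq_sub_two_X_mul_eq (F := fun j ↦ rowSeries j) (fun j ↦ ?_) X_pow_dvd_rowSeries
  have h := rowSeries_eq (j := j + 1) (by omega)
  push_cast
  rwa [add_sub_cancel_right, add_assoc (j : ℤ)] at h

/-- The series `q` in the factorisation `(1 - t(x + x⁻¹))² - 4t² = q² Δ₊(x) Δ₊(x⁻¹)`. -/
noncomputable def kernelConst : ℤ⟦X⟧ := (1 - X * c₊) * (1 + X * c₋)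

/-- The polynomial `Δ₊` in `x` in the factorisation
`(1 - t(x + x⁻¹))² - 4t² = q² Δ₊(x) Δ₊(x⁻¹)`. -/
noncomputable def kernelFactor : ℤ[X]⟦X⟧ := quadratic (c₊ - 1) (1 - c₋)

lemma isUnit_kernelFactor : IsUnit kernelFactor :=
  isUnit_quadratic (by simp [constantCoeff_catalanRescaled])
    (by simp [constantCoeff_catalanRescaled])

lemma constantCoeff_kernelConst : constantCoeff kernelConst = 1 := by
  simp [kernelConst]

lemma kernelConst_mul_sub : kernelConst * (c₊ - c₋) = X * (c₊ + c₋) := by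
  rw [kernelConst]
  linear_combination (1 + X * c₋) * catalanRescaled_one_eq -
    (1 - X * c₊) * catalanRescaled_neg_one_eq

theorem kernel_factorization : (1 - X * horizontalSteps) ^ 2 - 4 * X ^ 2 =
    PowerSeries.map toLaurent kernelFactor * invertX (PowerSeries.map toLaurent
      (PowerSeries.map Polynomial.C kernelConst ^ 2 * kernelFactor)) := by
  have hxy : PowerSeries.C (T 1 : ℤ[T;T⁻¹]) * PowerSeries.C (T (-1)) = 1 := by
    rw [← map_mul, ← LaurentPolynomial.T_add, add_neg_cancel, LaurentPolynomial.T_zero, map_one]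
  have hc := congrArg (PowerSeries.map LaurentPolynomial.C) catalanRescaled_one_eq
  have hd := congrArg (PowerSeries.map LaurentPolynomial.C) catalanRescaled_neg_one_eq
  simp only [map_add, map_sub, map_mul, map_pow, map_one, PowerSeries.map_X] at hc hd
  rw [horizontalSteps, kernel_eq_mul hxy hc hd, kernelFactor, map_mul, map_pow, map_mul, map_pow,
    invertX_map_toLaurent_quadratic, map_toLaurent_quadratic, map_toLaurent_map_C, invertX_map_C,
    mul_comm (_ ^ 2), mul_assoc]
  simp only [kernelConst, map_mul, map_sub, map_add, map_one, PowerSeries.map_X]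

/-- The series `rowSeries 0` seen as a power series with polynomial coefficients in `x`. -/
noncomputable def axisPart : ℤ[X]⟦X⟧ := polynomialPart (rowSeries 0)

/-- The series `boundarySeries`, in which only nonpositive powers of `x` occur, seen as a power
series with polynomial coefficients in `x⁻¹`. -/
noncomputable def boundaryPart : ℤ[X]⟦X⟧ := polynomialPart (invertX boundarySeries)

lemma xCoeff_axisPart (k : ℕ) : xCoeff k axisPart = slitSeries k 0 := by
  rw [axisPart, xCoeff_polynomialPart, laurentCoeff_rowSeries]

lemma xCoeff_zero_axisPart : xCoeff 0 axisPart = 1 := by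
  rw [xCoeff_axisPart, Nat.cast_zero, slitSeries_of_nonpos le_rfl, if_pos rfl]

lemma xCoeff_boundaryPart (k : ℕ) :
    xCoeff k boundaryPart = laurentCoeff (-k) boundarySeries := by
  rw [boundaryPart, xCoeff_polynomialPart, laurentCoeff_invertX]

theorem wienerHopf_factorization : axisPart ^ 2 * kernelFactor = 1 ∧
    boundaryPart ^ 2 = PowerSeries.map Polynomial.C kernelConst ^ 2 * kernelFactor := by
  have haxis : PowerSeries.map toLaurent axisPart = rowSeries 0 :=
    map_toLaurent_polynomialPart fun i ↦ laurentCoeff_rowSeries_zero_of_neg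
  have hhit : invertX (PowerSeries.map toLaurent boundaryPart) = boundarySeries :=
    invertX_map_toLaurent_polynomialPart fun i ↦ laurentCoeff_boundarySeries_of_pos
  have hunit : IsUnit (PowerSeries.map Polynomial.C kernelConst ^ 2 * kernelFactor) := by
    refine .mul (.pow _ (.map _ ?_)) isUnit_kernelFactor
    rw [PowerSeries.isUnit_iff_constantCoeff, constantCoeff_kernelConst]
    exact isUnit_one
  have h : PowerSeries.map toLaurent (axisPart ^ 2 * kernelFactor) *
      invertX (PowerSeries.map toLaurent
        (PowerSeries.map Polynomial.C kernelConst ^ 2 * kernelFactor)) =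
      invertX (PowerSeries.map toLaurent (boundaryPart ^ 2)) := by
    rw [map_mul (PowerSeries.map toLaurent) (axisPart ^ 2), mul_assoc, ← kernel_factorization,
      map_pow, map_pow, map_pow, haxis, hhit, boundarySeries_sq, mul_comm]
  obtain ⟨hf, hg⟩ := eq_map_C_of_map_toLaurent_mul_eq hunit h
  have hzero : xCoeff 0 (axisPart ^ 2 * kernelFactor) = 1 := by
    simp [sq, xCoeff_zero_mul, xCoeff_zero_axisPart, kernelFactor, xCoeff_zero_quadratic]
  rw [hzero, map_one] at hf hg
  exact ⟨hf, hg.trans (one_mul _)⟩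

lemma two_mul_slitSeries_one_zero : 2 * slitSeries 1 0 = c₊ - c₋ := by
  have h := two_mul_xCoeff_one_of_sq_mul_quadratic_eq_one xCoeff_zero_axisPart
    wienerHopf_factorization.1
  rw [xCoeff_axisPart, Nat.cast_one] at h
  linear_combination h

lemma two_mul_slitSeries_two_zero :
    2 * slitSeries 2 0 = 3 * slitSeries 1 0 ^ 2 - (c₊ - 1) * (1 - c₋) := by
  have h := two_mul_xCoeff_two_of_sq_mul_quadratic_eq_one xCoeff_zero_axisPart
    wienerHopf_factorization.1
  simpa only [xCoeff_axisPart, Nat.cast_one, Nat.cast_ofNat] using h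

lemma xCoeff_zero_boundaryPart : xCoeff 0 boundaryPart = kernelConst := by
  have h := congrArg (xCoeff 0) wienerHopf_factorization.2
  simp only [sq, xCoeff_zero_mul, xCoeff_map_C, if_true, kernelFactor, xCoeff_zero_quadratic,
    mul_one] at h
  refine eq_of_sq_eq_sq_of_constantCoeff_add_ne_zero (by simpa only [sq] using h) ?_
  simp [xCoeff_boundaryPart, laurentCoeff_boundarySeries, slitSeries_of_nonpos,
    constantCoeff_kernelConst]

theorem four_mul_slitSeries_neg_one_one : 4 * slitSeries (-1) 1 = c₊ + c₋ - 2 := by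
  have hne : kernelConst ≠ 0 := fun h ↦ by simpa [h] using constantCoeff_kernelConst
  have hleft := two_mul_xCoeff_one_of_sq_eq hne xCoeff_zero_boundaryPart wienerHopf_factorization.2
  have hbdry : xCoeff 1 boundaryPart = -(X * (1 + 2 * slitSeries (-1) 1)) := by
    simp [xCoeff_boundaryPart, laurentCoeff_boundarySeries, slitSeries_of_nonpos]
  rw [hbdry] at hleft
  refine mul_left_cancel₀ PowerSeries.X_ne_zero ?_
  linear_combination -hleft + kernelConst_mul_sub

theorem four_mul_slitSeries_one_one :
    4 * slitSeries 1 1 = catalanFourSq + c₊ + c₋ - 3 := by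
  have hrec : slitSeries 1 0 = X * (1 + slitSeries 2 0 + 2 * slitSeries 1 1) := by
    simpa [slitSeries_of_nonpos] using slitSeries_zero_right_eq one_pos
  have height : (8 : ℤ⟦X⟧) ≠ 0 := fun h ↦ by
    simpa [map_ofNat] using congrArg constantCoeff h
  refine mul_left_cancel₀ (mul_ne_zero height (pow_ne_zero 2 PowerSeries.X_ne_zero)) ?_
  linear_combination (-16 * X) * hrec - 8 * X ^ 2 * two_mul_slitSeries_two_zero +
    (8 * X - 6 * X ^ 2 * (2 * slitSeries 1 0 + c₊ - c₋)) * two_mul_slitSeries_one_zero +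
    6 * X * catalanRescaled_one_eq - 6 * X * catalanRescaled_neg_one_eq -
    eight_mul_X_sq_mul_catalanFourSq

theorem two_mul_slitCount_neg_one_one_even {n : ℕ} (hn : 1 ≤ n) :
    2 * slitCount sqSteps (-1) 1 (2 * n) = catalan (2 * n) := by
  have h := congrArg (coeff (2 * n)) four_mul_slitSeries_neg_one_one
  rw [← map_ofNat PowerSeries.C 4, ← map_ofNat PowerSeries.C 2] at h
  simp only [PowerSeries.coeff_C_mul, coeff_slitSeries, map_sub, map_add, coeff_catalanRescaled,
    one_pow, one_mul, (even_two_mul n).neg_one_pow, PowerSeries.coeff_C,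
    show 2 * n ≠ 0 by omega, if_false, sub_zero] at h
  zify
  linarith

theorem two_mul_slitCount_one_one_even {n : ℕ} (hn : 1 ≤ n) :
    2 * slitCount sqSteps 1 1 (2 * n) = 2 * 4 ^ (n - 1) * catalan n + catalan (2 * n) := by
  have h := congrArg (coeff (2 * n)) four_mul_slitSeries_one_one
  rw [← map_ofNat PowerSeries.C 4, ← map_ofNat PowerSeries.C 3] at h
  simp only [PowerSeries.coeff_C_mul, coeff_slitSeries, map_sub, map_add,
    coeff_two_mul_catalanFourSq, coeff_catalanRescaled, one_pow, one_mul,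
    (even_two_mul n).neg_one_pow, PowerSeries.coeff_C, show 2 * n ≠ 0 by omega, if_false, sub_zero,
    ← mul_pow_sub_one (show n ≠ 0 by omega) (4 : ℤ)] at h
  zify
  linarith

end SlitSeries

end SlitPlane

/-- for `n ≥ 1`, `a_{-1,1}(2n) = C_{2n}/2` and
`a_{1,1}(2n) = 4^{n-1}·Cₙ + C_{2n}/2` (stated multiplied by 2 to stay in ℕ);
walks of odd length ending at these points do not exist. -/
theorem slit_count_diag_endpoints (n : ℕ) (hn : 1 ≤ n) :
    2 * slitCount sqSteps (-1) 1 (2 * n) = catalan (2 * n)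
    ∧ 2 * slitCount sqSteps 1 1 (2 * n) = 2 * 4 ^ (n - 1) * catalan n + catalan (2 * n)
    ∧ (∀ m : ℕ, slitCount sqSteps (-1) 1 (2 * m + 1) = 0)
    ∧ (∀ m : ℕ, slitCount sqSteps 1 1 (2 * m + 1) = 0) := by
  have hodd (i : ℤ) (hi : Odd i) (m : ℕ) : slitCount sqSteps i 1 (2 * m + 1) = 0 :=
    SlitPlane.slitCount_sqSteps_eq_zero_of_odd (by push_cast; grind)
  exact ⟨SlitPlane.two_mul_slitCount_neg_one_one_even hn,
    SlitPlane.two_mul_slitCount_one_one_even hn, hodd (-1) odd_neg_one, hodd 1 odd_one⟩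
end

section
/- For walks on the slit plane with diagonal steps: for all n ≥ 0, the number of such walks of length 2n+1 ending at (1,1) equals C_{2n+1}; the number of such walks of length 2n+1 ending at (−1,1) equals 2·4ⁿ·Cₙ − C_{2n+1}; and for all n ≥ 1, the number of such walks of length 2n ending at (0,2) equals C_{2n}. Here Cₘ = binom(2m,m)/(m+1) is the m-th Catalan number. -/
open Filter

/-!
Let `A_j` count the walks ending at height `j`, with `t` for the length and `x` for the abscissa.
Off the axis `A_j = t (x + x⁻¹) (A_{j-1} + A_{j+1})`, so `A_j = Y ^ j A_0` for `j ≥ 0`, where `Y` is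
the power series root of `Y = t (x + x⁻¹) (1 + Y²)`. On the axis this turns into
`A_0² (1 - 4t²(x + x⁻¹)²) = M²`, where `A_0` has only nonnegative and `M` only nonpositive powers of
`x`. With `d = Cat(4t²)` the kernel equals `d⁻² (1 - (d - 1) x²) (1 - (d - 1) x⁻²)`, so uniqueness
of such factorizations gives `A_0² (1 - (d - 1) x²) = 1` and `M² d² = 1 - (d - 1) x⁻²`.

The constant term in `x` of `M` determines the total number of walks that end at `(1, 1)` or
`(-1, 1)`. Those ending at `(1, 1)` alone and at `(0, 2)` come from the expansion of `A_0` to first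
order at the root `x = i` of `x² + 1`, together with the identity `E² = d` for the even part `E` of
`Cat(t)`.
-/

open scoped LaurentPolynomial Polynomial PowerSeries
open PowerSeries (X C coeff)

section Catalan

variable {R : Type*} [CommRing R]

/-- The power series `Cat(w t²)`, where `Cat` is the Catalan generating function. -/
noncomputable def catalanScaledSq (w : R) : R⟦X⟧ :=
  PowerSeries.expand 2 two_ne_zero <|
    PowerSeries.rescale w (PowerSeries.map (Nat.castRingHom R) PowerSeries.catalanSeries)

theorem map_catalanSeries_eq :
    PowerSeries.map (Nat.castRingHom R) PowerSeries.catalanSeries =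
      1 + X * PowerSeries.map (Nat.castRingHom R) PowerSeries.catalanSeries ^ 2 := by
  have h := congrArg (PowerSeries.map (Nat.castRingHom R))
    PowerSeries.catalanSeries_sq_mul_X_add_one
  simp only [map_add, map_mul, map_pow, PowerSeries.map_X, map_one] at h
  linear_combination -h

theorem catalanScaledSq_eq (w : R) :
    catalanScaledSq w = 1 + C w * X ^ 2 * catalanScaledSq w ^ 2 := by
  have h := congrArg (fun f ↦ PowerSeries.expand 2 two_ne_zero (PowerSeries.rescale w f))
    (map_catalanSeries_eq (R := R))
  simpa only [map_add, map_mul, map_pow, map_one, PowerSeries.rescale_X, PowerSeries.expand_X,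
    PowerSeries.expand_C, catalanScaledSq] using h

theorem catalanScaledSq_four_eq :
    catalanScaledSq (4 : R) = 1 + 4 * X ^ 2 * catalanScaledSq 4 ^ 2 := by
  simpa only [map_ofNat] using catalanScaledSq_eq (4 : R)

theorem coeff_two_mul_catalanScaledSq (w : R) (n : ℕ) :
    coeff (2 * n) (catalanScaledSq w) = w ^ n * catalan n := by
  simp [catalanScaledSq, PowerSeries.coeff_expand_mul, PowerSeries.coeff_rescale]

theorem constantCoeff_catalanScaledSq (w : R) :
    PowerSeries.constantCoeff (catalanScaledSq w) = 1 := by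
  simpa using coeff_two_mul_catalanScaledSq w 0

theorem map_catalanScaledSq {S : Type*} [CommRing S] (f : R →+* S) (w : R) :
    PowerSeries.map f (catalanScaledSq w) = catalanScaledSq (f w) := by
  ext n
  simp only [catalanScaledSq, PowerSeries.coeff_map, PowerSeries.coeff_expand,
    PowerSeries.coeff_rescale, PowerSeries.catalanSeries_coeff]
  split_ifs <;> simp

theorem eq_of_eq_one_add_mul_sq {a f g : R⟦X⟧} (hf : f = 1 + X * a * f ^ 2)
    (hg : g = 1 + X * a * g ^ 2) : f = g := by
  have hunit : IsUnit (1 - X * a * (f + g)) := by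
    simp [PowerSeries.isUnit_iff_constantCoeff]
  rw [← sub_eq_zero, ← hunit.mul_left_eq_zero]
  linear_combination hf - hg

variable (R)

/-- The part of even degree of the Catalan generating function. -/
noncomputable def evenCatalan : R⟦X⟧ :=
  PowerSeries.mk fun n ↦ if Even n then (catalan n : R) else 0

/-- The part of odd degree of the Catalan generating function. -/
noncomputable def oddCatalan : R⟦X⟧ :=
  PowerSeries.mk fun n ↦ if Even n then 0 else (catalan n : R)

variable {R}

theorem constantCoeff_evenCatalan : PowerSeries.constantCoeff (evenCatalan R) = 1 := by
  simp [evenCatalan, ← PowerSeries.coeff_zero_eq_constantCoeff_apply]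

theorem evenCatalan_add_oddCatalan :
    evenCatalan R + oddCatalan R =
      PowerSeries.map (Nat.castRingHom R) PowerSeries.catalanSeries := by
  ext n
  by_cases hn : Even n <;> simp [evenCatalan, oddCatalan, hn]

theorem evenCatalan_sub_oddCatalan :
    evenCatalan R - oddCatalan R =
      PowerSeries.rescale (-1)
        (PowerSeries.map (Nat.castRingHom R) PowerSeries.catalanSeries) := by
  ext n
  by_cases hn : Even n
  · simp [evenCatalan, oddCatalan, PowerSeries.coeff_rescale, hn, hn.neg_one_pow]
  · simp [evenCatalan, oddCatalan, PowerSeries.coeff_rescale, hn,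
      (Nat.not_even_iff_odd.mp hn).neg_one_pow]

theorem evenCatalan_sub_oddCatalan_eq :
    evenCatalan R - oddCatalan R = 1 - X * (evenCatalan R - oddCatalan R) ^ 2 := by
  have h := congrArg (PowerSeries.rescale (-1)) (map_catalanSeries_eq (R := R))
  simp only [map_add, map_mul, map_pow, map_one, PowerSeries.rescale_X, map_neg,
    ← evenCatalan_sub_oddCatalan] at h
  linear_combination h

theorem two_mul_X_ne_zero [CharZero R] : (2 * X : R⟦X⟧) ≠ 0 := fun h ↦ by
  simpa [two_mul, one_add_one_eq_two] using congrArg (coeff 1) h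

variable [IsDomain R] [CharZero R]

theorem evenCatalan_mul_one_sub : evenCatalan R * (1 - 2 * X * oddCatalan R) = 1 := by
  have hplus := map_catalanSeries_eq (R := R)
  have hminus := evenCatalan_sub_oddCatalan_eq (R := R)
  rw [← evenCatalan_add_oddCatalan] at hplus
  apply mul_left_cancel₀ (left_ne_zero_of_mul (two_mul_X_ne_zero (R := R)))
  linear_combination hplus + hminus

theorem oddCatalan_eq : oddCatalan R = X * (evenCatalan R ^ 2 + oddCatalan R ^ 2) := by
  have h := map_catalanSeries_eq (R := R)
  rw [← evenCatalan_add_oddCatalan] at h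
  linear_combination h - evenCatalan_mul_one_sub (R := R)

theorem evenCatalan_sq : evenCatalan R ^ 2 = catalanScaledSq 4 := by
  apply eq_of_eq_one_add_mul_sq (a := 4 * X)
  · linear_combination (evenCatalan R * (1 - 2 * X * oddCatalan R) + 1) *
      evenCatalan_mul_one_sub (R := R) + 4 * X * evenCatalan R ^ 2 * oddCatalan_eq (R := R)
  · linear_combination catalanScaledSq_four_eq (R := R)

theorem eq_of_sq_eq_sq_of_constantCoeff_eq_one {f g : R⟦X⟧} (h : f ^ 2 = g ^ 2)
    (hf : PowerSeries.constantCoeff f = 1) (hg : PowerSeries.constantCoeff g = 1) : f = g := by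
  refine (sq_eq_sq_iff_eq_or_eq_neg.mp h).resolve_right fun hneg ↦ ?_
  have hone := congrArg PowerSeries.constantCoeff hneg
  rw [map_neg, hf, hg, eq_comm, neg_eq_self] at hone
  exact one_ne_zero hone

end Catalan

section Walks

theorem isSlitWalk_snoc {A : Set (ℤ × ℤ)} {n : ℕ} {w : Fin (n + 1) → ℤ × ℤ} {p : ℤ × ℤ} :
    IsSlitWalk A (n + 1) (Fin.snoc (α := fun _ ↦ ℤ × ℤ) w p) ↔
      IsSlitWalk A n w ∧ p - w (Fin.last n) ∈ A ∧ p ∉ slitH := by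
  have hzero : (Fin.snoc (α := fun _ ↦ ℤ × ℤ) w p : Fin (n + 2) → ℤ × ℤ) 0 = w 0 :=
    Fin.snoc_castSucc (α := fun _ ↦ ℤ × ℤ) p w 0
  simp only [IsSlitWalk, hzero, Fin.forall_fin_succ', Fin.snoc_castSucc, Fin.snoc_last,
    Fin.succ_castSucc, Fin.succ_last, Fin.val_castSucc, Fin.val_last, Nat.le_add_left,
    forall_const]
  tauto

/-- The walks on the slit plane of length `n` with steps in `A` that end at `p`. -/
abbrev SlitWalkTo (A : Set (ℤ × ℤ)) (n : ℕ) (p : ℤ × ℤ) : Type :=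
  {w : Fin (n + 1) → ℤ × ℤ // IsSlitWalk A n w ∧ w (Fin.last n) = p}

/-- Appends to a walk a last step `s`, leading to the point `p`. -/
def SlitWalkTo.append {A : Set (ℤ × ℤ)} {n : ℕ} {p : ℤ × ℤ} (hp : p ∉ slitH)
    (w : Σ s : A, SlitWalkTo A n (p - s)) : SlitWalkTo A (n + 1) p :=
  ⟨Fin.snoc (α := fun _ ↦ ℤ × ℤ) w.2.1 p,
    isSlitWalk_snoc.mpr ⟨w.2.2.1, by simp [w.2.2.2], hp⟩, Fin.snoc_last ..⟩

theorem SlitWalkTo.append_bijective {A : Set (ℤ × ℤ)} {n : ℕ} {p : ℤ × ℤ} (hp : p ∉ slitH) :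
    Function.Bijective (SlitWalkTo.append (A := A) (n := n) hp) := by
  constructor
  · rintro ⟨s, w, hw, hws⟩ ⟨s', w', hw', hws'⟩ h
    obtain rfl : w = w' := by
      simpa only [append, Fin.init_snoc] using congrArg (fun v ↦ Fin.init v.1) h
    obtain rfl : s = s' := Subtype.ext (sub_right_injective (hws.symm.trans hws'))
    rfl
  · rintro ⟨w, hw, hwp⟩
    have hsnoc : Fin.snoc (α := fun _ ↦ ℤ × ℤ) (Fin.init w) p = w := by
      rw [← hwp, Fin.snoc_init_self]
    rw [← hsnoc, isSlitWalk_snoc] at hw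
    exact ⟨⟨⟨_, hw.2.1⟩, Fin.init w, hw.1, (sub_sub_cancel ..).symm⟩, Subtype.ext hsnoc⟩

theorem isEmpty_slitWalkTo_succ {A : Set (ℤ × ℤ)} {n : ℕ} {p : ℤ × ℤ} (hp : p ∈ slitH) :
    IsEmpty (SlitWalkTo A (n + 1) p) :=
  ⟨fun w ↦ w.2.1.2.2 (Fin.last (n + 1)) (by simp) (w.2.2.symm ▸ hp :)⟩

theorem subsingleton_slitWalkTo_zero (A : Set (ℤ × ℤ)) (p : ℤ × ℤ) :
    Subsingleton (SlitWalkTo A 0 p) := by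
  refine ⟨fun w w' ↦ Subtype.ext (funext fun m ↦ ?_)⟩
  rw [Fin.fin_one_eq_zero m, w.2.1.1, w'.2.1.1]

theorem finite_slitWalkTo (A : Set (ℤ × ℤ)) [Finite A] (n : ℕ) (p : ℤ × ℤ) :
    Finite (SlitWalkTo A n p) := by
  induction n generalizing p with
  | zero =>
    have := subsingleton_slitWalkTo_zero A p
    infer_instance
  | succ n ih =>
    by_cases hp : p ∈ slitH
    · have := isEmpty_slitWalkTo_succ (A := A) (n := n) hp
      infer_instance
    · exact Finite.of_surjective _ (SlitWalkTo.append_bijective hp).surjective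

theorem slitCount_zero (A : Set (ℤ × ℤ)) (i j : ℤ) :
    slitCount A i j 0 = if i = 0 ∧ j = 0 then 1 else 0 := by
  change Nat.card (SlitWalkTo A 0 (i, j)) = _
  split_ifs with h
  · obtain ⟨rfl, rfl⟩ := h
    have : Nonempty (SlitWalkTo A 0 (0, 0)) :=
      ⟨fun _ ↦ (0, 0), ⟨rfl, fun m ↦ m.elim0, fun m hm ↦ by omega⟩, rfl⟩
    have := subsingleton_slitWalkTo_zero A (0, 0)
    exact Nat.card_unique
  · have : IsEmpty (SlitWalkTo A 0 (i, j)) :=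
      ⟨fun w ↦ h (by simpa [eq_comm] using w.2.1.1.symm.trans w.2.2)⟩
    exact Nat.card_of_isEmpty

theorem slitCount_succ_of_mem (A : Set (ℤ × ℤ)) {i j : ℤ} (h : (i, j) ∈ slitH) (n : ℕ) :
    slitCount A i j (n + 1) = 0 :=
  have := isEmpty_slitWalkTo_succ (A := A) (n := n) h
  Nat.card_of_isEmpty

theorem slitCount_succ_of_notMem (A : Finset (ℤ × ℤ)) {i j : ℤ} (h : (i, j) ∉ slitH) (n : ℕ) :
    slitCount A i j (n + 1) = ∑ s ∈ A, slitCount A (i - s.1) (j - s.2) n := by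
  have := finite_slitWalkTo (A : Set (ℤ × ℤ)) n
  calc slitCount A i j (n + 1)
      = Nat.card (Σ s : A, SlitWalkTo A n ((i, j) - s)) :=
        (Nat.card_eq_of_bijective _ (SlitWalkTo.append_bijective h)).symm
    _ = ∑ s : A, slitCount A (i - s.1.1) (j - s.1.2) n := Nat.card_sigma
    _ = ∑ s ∈ A, slitCount A (i - s.1) (j - s.2) n :=
        Finset.sum_coe_sort A fun s ↦ slitCount A (i - s.1) (j - s.2) n

theorem mem_slitH {i j : ℤ} : (i, j) ∈ slitH ↔ j = 0 ∧ i ≤ 0 := Iff.rfl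

theorem slitCount_diagSteps_succ {i j : ℤ} (h : (i, j) ∉ slitH) (n : ℕ) :
    slitCount diagSteps i j (n + 1) =
      slitCount diagSteps (i - 1) (j - 1) n + slitCount diagSteps (i - 1) (j + 1) n +
        slitCount diagSteps (i + 1) (j - 1) n + slitCount diagSteps (i + 1) (j + 1) n := by
  have hcoe : diagSteps =
      ({(1, 1), (1, -1), (-1, 1), (-1, -1)} : Finset (ℤ × ℤ)) := by simp [diagSteps]
  rw [hcoe, slitCount_succ_of_notMem _ h]
  simp [add_assoc]

theorem slitCount_diagSteps_neg (i j : ℤ) (n : ℕ) :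
    slitCount diagSteps i (-j) n = slitCount diagSteps i j n := by
  induction n generalizing i j with
  | zero => simp [slitCount_zero]
  | succ n ih =>
    by_cases h : (i, j) ∈ slitH
    · rw [mem_slitH.mp h |>.1, neg_zero]
    · have h' : (i, -j) ∉ slitH := by simpa [mem_slitH] using h
      have hsub : -j - 1 = -(j + 1) := by ring
      have hadd : -j + 1 = -(j - 1) := by ring
      rw [slitCount_diagSteps_succ h, slitCount_diagSteps_succ h', hsub, hadd]
      simp only [ih]
      ring

theorem slitCount_diagSteps_eq_zero_of_odd {i j : ℤ} (hij : Odd (i + j)) (n : ℕ) :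
    slitCount diagSteps i j n = 0 := by
  induction n generalizing i j with
  | zero =>
    rw [slitCount_zero, if_neg]
    rintro ⟨rfl, rfl⟩
    simp at hij
  | succ n ih =>
    by_cases h : (i, j) ∈ slitH
    · exact slitCount_succ_of_mem _ h n
    · rw [slitCount_diagSteps_succ h, ih, ih, ih, ih] <;> grind

theorem slitCount_diagSteps_eq_zero_of_lt_abs {i : ℤ} (j : ℤ) {n : ℕ} (hi : (n : ℤ) < |i|) :
    slitCount diagSteps i j n = 0 := by
  induction n generalizing i j with
  | zero =>
    rw [slitCount_zero, if_neg]
    rintro ⟨rfl, -⟩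
    simp at hi
  | succ n ih =>
    by_cases h : (i, j) ∈ slitH
    · exact slitCount_succ_of_mem _ h n
    · rw [slitCount_diagSteps_succ h, ih, ih, ih, ih] <;> grind

end Walks

section LaurentCoefficients

variable {R : Type*} [CommRing R]

/-- The embedding of `R[x]⟦t⟧` into `R[x, x⁻¹]⟦t⟧`. -/
noncomputable def evalT : R[X]⟦X⟧ →+* R[T;T⁻¹]⟦X⟧ := PowerSeries.map Polynomial.toLaurent

/-- The substitution `x ↦ x⁻¹` in `R[x, x⁻¹]⟦t⟧`. -/
noncomputable def invertT : R[T;T⁻¹]⟦X⟧ →+* R[T;T⁻¹]⟦X⟧ :=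
  PowerSeries.map (LaurentPolynomial.invert (R := R) : R[T;T⁻¹] →+* R[T;T⁻¹])

/-- The embedding of `R[x]⟦t⟧` into `R[x, x⁻¹]⟦t⟧` that maps `x` to `x⁻¹`. -/
noncomputable def evalTInv : R[X]⟦X⟧ →+* R[T;T⁻¹]⟦X⟧ := invertT.comp evalT

/-- The part with nonnegative exponents of `x` of a series in `R[x, x⁻¹]⟦t⟧`. -/
noncomputable def nonnegPart : R[T;T⁻¹]⟦X⟧ →+ R[X]⟦X⟧ where
  toFun f := PowerSeries.mk fun n ↦ LaurentPolynomial.trunc (coeff n f)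
  map_zero' := by ext1 n; simp
  map_add' f g := by ext1 n; simp

/-- The coefficient of `x ^ i`, a series in `t`, of a series in `R[x, x⁻¹]⟦t⟧`. -/
noncomputable def xCoeff (i : ℤ) : R[T;T⁻¹]⟦X⟧ →+ R⟦X⟧ where
  toFun f := PowerSeries.mk fun n ↦ (coeff n f).coeff i
  map_zero' := by ext n; simp
  map_add' f g := by ext n; simp

theorem coeff_xCoeff (i : ℤ) (f : R[T;T⁻¹]⟦X⟧) (n : ℕ) :
    coeff n (xCoeff i f) = (coeff n f).coeff i := by
  simp [xCoeff]

theorem xCoeff_injective {f g : R[T;T⁻¹]⟦X⟧} (h : ∀ i, xCoeff i f = xCoeff i g) : f = g := by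
  ext n i
  simpa only [coeff_xCoeff] using congrArg (coeff n) (h i)

theorem coeff_coeff_nonnegPart (f : R[T;T⁻¹]⟦X⟧) (n k : ℕ) :
    (coeff n (nonnegPart f)).coeff k = (coeff n f).coeff k := by
  simp only [nonnegPart, AddMonoidHom.coe_mk, ZeroHom.coe_mk, PowerSeries.coeff_mk]
  rfl

theorem coeff_toLaurent_natCast (p : R[X]) (k : ℕ) :
    (Polynomial.toLaurent p).coeff (k : ℤ) = p.coeff k := by
  conv_rhs => rw [← Polynomial.trunc_toLaurent p]
  rfl

theorem coeff_toLaurent_of_neg (p : R[X]) {i : ℤ} (hi : i < 0) :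
    (Polynomial.toLaurent p).coeff i = 0 := by
  rw [← Finsupp.notMem_support_iff, LaurentPolynomial.support_coeff_toLaurent]
  simp only [Finset.mem_map, Nat.castEmbedding_apply, not_exists, not_and]
  omega

theorem coeff_xCoeff_natCast_evalT (p : R[X]⟦X⟧) (n k : ℕ) :
    coeff n (xCoeff k (evalT p)) = (coeff n p).coeff k := by
  rw [coeff_xCoeff, evalT, PowerSeries.coeff_map, coeff_toLaurent_natCast]

theorem xCoeff_evalT_of_neg (p : R[X]⟦X⟧) {i : ℤ} (hi : i < 0) : xCoeff i (evalT p) = 0 := by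
  ext n
  rw [coeff_xCoeff, evalT, PowerSeries.coeff_map, coeff_toLaurent_of_neg _ hi, map_zero]

theorem xCoeff_invertT (f : R[T;T⁻¹]⟦X⟧) (i : ℤ) : xCoeff i (invertT f) = xCoeff (-i) f := by
  ext n
  simp [coeff_xCoeff, invertT]

theorem xCoeff_evalTInv (p : R[X]⟦X⟧) (i : ℤ) : xCoeff i (evalTInv p) = xCoeff (-i) (evalT p) :=
  xCoeff_invertT ..

theorem evalT_nonnegPart {f : R[T;T⁻¹]⟦X⟧} (hf : ∀ i < 0, xCoeff i f = 0) :
    evalT (nonnegPart f) = f := by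
  refine xCoeff_injective fun i ↦ ?_
  rcases lt_or_ge i 0 with hi | hi
  · rw [xCoeff_evalT_of_neg _ hi, hf i hi]
  · lift i to ℕ using hi
    ext n
    rw [coeff_xCoeff_natCast_evalT, coeff_coeff_nonnegPart, coeff_xCoeff]

theorem nonnegPart_eq_map_C {f : R[T;T⁻¹]⟦X⟧} (hf : ∀ i > 0, xCoeff i f = 0) :
    nonnegPart f = PowerSeries.map Polynomial.C (xCoeff 0 f) := by
  ext n k
  rw [coeff_coeff_nonnegPart, PowerSeries.coeff_map, Polynomial.coeff_C, ← coeff_xCoeff]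
  split_ifs with hk
  · rw [hk, Nat.cast_zero]
  · rw [hf k (by omega), map_zero]

theorem evalT_injective : Function.Injective (evalT (R := R)) :=
  PowerSeries.map_injective _ Polynomial.toLaurent_injective

theorem evalTInv_injective : Function.Injective (evalTInv (R := R)) :=
  (PowerSeries.map_injective _ LaurentPolynomial.invert.injective).comp evalT_injective

theorem exists_evalTInv_eq {f : R[T;T⁻¹]⟦X⟧} (hf : ∀ i > 0, xCoeff i f = 0) :
    ∃ p, evalTInv p = f := by
  refine ⟨nonnegPart (invertT f), xCoeff_injective fun i ↦ ?_⟩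
  rw [xCoeff_evalTInv, evalT_nonnegPart fun i hi ↦ ?_, xCoeff_invertT, neg_neg]
  rw [xCoeff_invertT, hf _ (by omega)]

theorem map_constantCoeff_eq_xCoeff_evalT (p : R[X]⟦X⟧) :
    PowerSeries.map Polynomial.constantCoeff p = xCoeff 0 (evalT p) := by
  ext n
  simpa using (coeff_xCoeff_natCast_evalT p n 0).symm

theorem map_constantCoeff_eq_xCoeff_evalTInv (p : R[X]⟦X⟧) :
    PowerSeries.map Polynomial.constantCoeff p = xCoeff 0 (evalTInv p) := by
  rw [map_constantCoeff_eq_xCoeff_evalT, xCoeff_evalTInv, neg_zero]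

theorem eq_map_C_of_evalT_eq_evalTInv {p q : R[X]⟦X⟧} (h : evalT p = evalTInv q) :
    p = PowerSeries.map Polynomial.C (PowerSeries.map Polynomial.constantCoeff p) := by
  ext n k
  rw [PowerSeries.coeff_map, PowerSeries.coeff_map, Polynomial.coeff_C]
  split_ifs with hk
  · rw [hk, Polynomial.constantCoeff_apply]
  · have hneg : xCoeff k (evalT p) = 0 := by
      rw [h, xCoeff_evalTInv, xCoeff_evalT_of_neg _ (by omega)]
    rw [← coeff_xCoeff_natCast_evalT, hneg, map_zero]

theorem evalT_catalanScaledSq_four :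
    evalT (catalanScaledSq (4 : R[X])) = catalanScaledSq 4 := by
  rw [evalT, map_catalanScaledSq, map_ofNat]

theorem evalTInv_catalanScaledSq_four :
    evalTInv (catalanScaledSq (4 : R[X])) = catalanScaledSq 4 := by
  rw [evalTInv, RingHom.comp_apply, evalT_catalanScaledSq_four, invertT, map_catalanScaledSq,
    map_ofNat]

theorem wienerHopf_factor_unique {P Q G : R[X]⟦X⟧} (hG : IsUnit G)
    (h : evalT P * (evalT G * evalTInv G) = evalTInv Q)
    (hone : PowerSeries.map Polynomial.constantCoeff (P * G) = 1) : P * G = 1 ∧ Q = G := by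
  obtain ⟨H, hH⟩ := hG.exists_right_inv
  have hsplit : evalT (P * G) = evalTInv (Q * H) := by
    have hH' := congrArg evalTInv hH
    rw [map_mul, map_one] at hH'
    rw [map_mul, map_mul]
    linear_combination evalTInv H * h - evalT P * evalT G * hH'
  have hPG : P * G = 1 := by
    rw [eq_map_C_of_evalT_eq_evalTInv hsplit, hone, map_one]
  refine ⟨hPG, evalTInv_injective ?_⟩
  rw [← h, ← mul_assoc, ← map_mul, hPG, map_one, one_mul]

end LaurentCoefficients

section Step

variable (R : Type*) [CommRing R]

/-- The weight `t (x + x⁻¹)` of the horizontal part of a diagonal step. -/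
noncomputable def stepWeight : R[T;T⁻¹]⟦X⟧ :=
  X * C (LaurentPolynomial.T 1 + LaurentPolynomial.T (-1))

variable {R}

theorem coeff_mul_T (f : R[T;T⁻¹]) (m i : ℤ) :
    (f * LaurentPolynomial.T m).coeff i = f.coeff (i - m) := by
  rw [LaurentPolynomial.T, AddMonoidAlgebra.coeff_mul_single_apply, mul_one, sub_eq_add_neg]

theorem xCoeff_stepWeight_mul (i : ℤ) (f : R[T;T⁻¹]⟦X⟧) :
    xCoeff i (stepWeight R * f) = X * (xCoeff (i - 1) f + xCoeff (i + 1) f) := by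
  ext n
  cases n with
  | zero => simp [coeff_xCoeff, stepWeight]
  | succ n =>
    simp [coeff_xCoeff, stepWeight, mul_assoc, PowerSeries.coeff_succ_X_mul, add_mul, coeff_mul_T]

theorem X_mul_trunc_T_add_T_mul (f : R[T;T⁻¹]) :
    Polynomial.X *
        LaurentPolynomial.trunc ((LaurentPolynomial.T 1 + LaurentPolynomial.T (-1)) * f) =
      (Polynomial.X ^ 2 + 1) * LaurentPolynomial.trunc f
        + Polynomial.X * Polynomial.C (f.coeff (-1)) - Polynomial.C (f.coeff 0) := by
  have hcoeff (g : R[T;T⁻¹]) (k : ℕ) : (LaurentPolynomial.trunc g).coeff k = g.coeff k := rfl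
  ext k
  rcases k with _ | _ | k
  · simp [hcoeff, Polynomial.mul_coeff_zero]
  · simp [hcoeff, add_mul, Polynomial.coeff_X_mul, coeff_mul_T, Polynomial.coeff_C,
      Polynomial.coeff_X_pow_mul', add_comm]
  · simp [hcoeff, add_mul, Polynomial.coeff_X_mul, coeff_mul_T, Polynomial.coeff_X_pow_mul,
      add_assoc]

theorem C_X_mul_nonnegPart_stepWeight_mul (f : R[T;T⁻¹]⟦X⟧) :
    C Polynomial.X * nonnegPart (stepWeight R * f) =
      X * ((C Polynomial.X ^ 2 + 1) * nonnegPart f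
        + C Polynomial.X * PowerSeries.map Polynomial.C (xCoeff (-1) f)
        - PowerSeries.map Polynomial.C (xCoeff 0 f)) := by
  have hC : (C Polynomial.X ^ 2 + 1 : R[X]⟦X⟧) = C (Polynomial.X ^ 2 + 1) := by simp
  rw [hC]
  ext1 n
  cases n with
  | zero => simp [nonnegPart, stepWeight]
  | succ n =>
    simp only [nonnegPart, stepWeight, AddMonoidHom.coe_mk, ZeroHom.coe_mk, mul_assoc,
      PowerSeries.coeff_succ_X_mul, PowerSeries.coeff_C_mul, PowerSeries.coeff_mk,
      map_add (coeff n), map_sub (coeff n), PowerSeries.coeff_map, coeff_xCoeff]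
    exact X_mul_trunc_T_add_T_mul (coeff n f)

end Step

section Recurrence

variable {R : Type*} [CommRing R]

theorem eq_zero_of_recurrence {g : R⟦X⟧} {b : ℕ → R⟦X⟧} (hzero : b 0 = 0)
    (hb : ∀ j, b (j + 1) = X * g * (b j + b (j + 2))) (j : ℕ) : b j = 0 := by
  have hdvd (n j : ℕ) : X ^ n ∣ b j := by
    induction n generalizing j with
    | zero => simp
    | succ n ih =>
      rcases j with _ | j
      · simp [hzero]
      · rw [hb, pow_succ', mul_assoc]
        exact mul_dvd_mul_left _ (dvd_mul_of_dvd_right (dvd_add (ih j) (ih (j + 2))) _)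
  ext n
  rw [PowerSeries.X_pow_dvd_iff.mp (hdvd (n + 1) j) n n.lt_succ_self, map_zero]

theorem sq_mul_one_sub_four_mul_sq {s : R} {a : ℕ → R⟦X⟧}
    (ha : ∀ j, a (j + 1) = X * C s * (a j + a (j + 2))) :
    a 0 ^ 2 * (1 - 4 * (X * C s) ^ 2) = (a 0 - 2 * (X * C s) * a 1) ^ 2 := by
  obtain ⟨Y, hY⟩ : ∃ Y : R⟦X⟧, Y = X * C s * (1 + Y ^ 2) := by
    refine ⟨X * C s * catalanScaledSq (s ^ 2), ?_⟩
    have h := catalanScaledSq_eq (s ^ 2)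
    rw [map_pow] at h
    linear_combination X * C s * h
  have hone : a 1 = Y * a 0 := by
    have h := eq_zero_of_recurrence (g := C s) (b := fun j ↦ a j - Y ^ j * a 0) (by simp)
      (fun j ↦ by linear_combination ha j - Y ^ j * a 0 * hY) 1
    linear_combination h
  rw [hone]
  linear_combination 4 * (X * C s) * a 0 ^ 2 * hY

theorem one_sub_four_mul_sq_factorization {t d u v : R} (hd : d = 1 + 4 * t ^ 2 * d ^ 2)
    (huv : u * v = 1) :
    d ^ 2 * (1 - 4 * (t * (u + v)) ^ 2) = (1 - (d - 1) * u ^ 2) * (1 - (d - 1) * v ^ 2) := by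
  linear_combination (2 + u ^ 2 + v ^ 2) * hd -
    (8 * t ^ 2 * d ^ 2 + (d - 1) ^ 2 * (u * v + 1)) * huv

end Recurrence

section GeneratingFunctions

/-- The generating function, by length, of the walks on the slit plane with diagonal steps that
end at `(i, j)`. Its coefficients are complex because the root `i` of `x² + 1` will be substituted
for `x` in bivariate series. -/
noncomputable def walkGF (i j : ℤ) : ℂ⟦X⟧ :=
  PowerSeries.mk fun n ↦ (slitCount diagSteps i j n : ℂ)

theorem coeff_walkGF (i j : ℤ) (n : ℕ) : coeff n (walkGF i j) = slitCount diagSteps i j n :=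
  PowerSeries.coeff_mk ..

theorem walkGF_zero_zero : walkGF 0 0 = 1 := by
  ext n
  rw [coeff_walkGF, PowerSeries.coeff_one]
  cases n with
  | zero => simp [slitCount_zero]
  | succ n => simp [slitCount_succ_of_mem diagSteps (mem_slitH.mpr ⟨rfl, le_rfl⟩) n]

theorem walkGF_zero_of_neg {i : ℤ} (hi : i < 0) : walkGF i 0 = 0 := by
  ext n
  rw [coeff_walkGF, map_zero]
  cases n with
  | zero => simp [slitCount_zero, hi.ne]
  | succ n => simp [slitCount_succ_of_mem diagSteps (mem_slitH.mpr ⟨rfl, hi.le⟩) n]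

theorem walkGF_neg (i j : ℤ) : walkGF i (-j) = walkGF i j := by
  ext n
  rw [coeff_walkGF, coeff_walkGF, slitCount_diagSteps_neg]

theorem walkGF_eq_zero_of_odd {i j : ℤ} (hij : Odd (i + j)) : walkGF i j = 0 := by
  ext n
  rw [coeff_walkGF, slitCount_diagSteps_eq_zero_of_odd hij, Nat.cast_zero, map_zero]

theorem walkGF_eq {i j : ℤ} (h : (i, j) ∉ slitH) :
    walkGF i j = X * (walkGF (i - 1) (j - 1) + walkGF (i - 1) (j + 1) + walkGF (i + 1) (j - 1)
      + walkGF (i + 1) (j + 1)) := by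
  ext n
  cases n with
  | zero =>
    rw [coeff_walkGF, slitCount_zero, if_neg, PowerSeries.coeff_zero_X_mul, Nat.cast_zero]
    rintro ⟨rfl, rfl⟩
    exact h (mem_slitH.mpr ⟨rfl, le_rfl⟩)
  | succ n =>
    simp only [coeff_walkGF, PowerSeries.coeff_succ_X_mul, map_add, slitCount_diagSteps_succ h,
      Nat.cast_add]

/-- The generating function of the walks on the slit plane with diagonal steps that end at height
`j`, where `x` marks the final abscissa and `t` the length. -/
noncomputable def rowGF (j : ℤ) : ℂ[T;T⁻¹]⟦X⟧ :=
  PowerSeries.mk fun n ↦ .ofCoeff <|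
    Finsupp.onFinset (Finset.Icc (-(n : ℤ)) n) (fun i ↦ (slitCount diagSteps i j n : ℂ))
      fun i hi ↦ by
        rw [Finset.mem_Icc, ← abs_le]
        contrapose! hi
        rw [slitCount_diagSteps_eq_zero_of_lt_abs j hi, Nat.cast_zero]

theorem xCoeff_rowGF (i j : ℤ) : xCoeff i (rowGF j) = walkGF i j := by
  ext n
  simp [coeff_xCoeff, rowGF, coeff_walkGF]

theorem rowGF_eq {j : ℤ} (hj : j ≠ 0) :
    rowGF j = stepWeight ℂ * (rowGF (j - 1) + rowGF (j + 1)) := by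
  refine xCoeff_injective fun i ↦ ?_
  rw [xCoeff_stepWeight_mul, xCoeff_rowGF, walkGF_eq fun h ↦ hj (mem_slitH.mp h).1]
  simp only [map_add, xCoeff_rowGF]
  ring

/-- The defect of the step recursion along the axis: its coefficients count the trivial walk and,
with negative sign, the walks whose last step is a first return to the half-line. -/
noncomputable def axisDefect : ℂ[T;T⁻¹]⟦X⟧ := rowGF 0 - 2 * stepWeight ℂ * rowGF 1

theorem xCoeff_axisDefect (i : ℤ) :
    xCoeff i axisDefect = walkGF i 0 - 2 * X * (walkGF (i - 1) 1 + walkGF (i + 1) 1) := by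
  rw [axisDefect, map_sub, xCoeff_rowGF, two_mul, add_mul, map_add, xCoeff_stepWeight_mul,
    xCoeff_rowGF, xCoeff_rowGF]
  ring

theorem xCoeff_axisDefect_of_pos {i : ℤ} (hi : 0 < i) : xCoeff i axisDefect = 0 := by
  have hrec := walkGF_eq (i := i) (j := 0) fun h ↦ (mem_slitH.mp h).2.not_gt hi
  rw [zero_sub, zero_add, walkGF_neg, walkGF_neg] at hrec
  rw [xCoeff_axisDefect]
  linear_combination hrec

theorem rowGF_zero_sq_mul :
    rowGF 0 ^ 2 * (1 - 4 * stepWeight ℂ ^ 2) = axisDefect ^ 2 := by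
  have hrec (j : ℕ) : rowGF ((j + 1 : ℕ) : ℤ) =
      X * C (LaurentPolynomial.T 1 + LaurentPolynomial.T (-1)) *
        (rowGF (j : ℤ) + rowGF ((j + 2 : ℕ) : ℤ)) := by
    rw [rowGF_eq (by omega), stepWeight]
    congr 3
    all_goals push_cast; ring
  exact sq_mul_one_sub_four_mul_sq (a := fun j : ℕ ↦ rowGF (j : ℤ)) hrec

end GeneratingFunctions

section Kernel

/-- The canonical factor `1 - (Cat(4t²) - 1) x²` of the kernel `1 - 4t²(x + x⁻¹)²`. -/
noncomputable def kernelFactor : ℂ[X]⟦X⟧ := 1 - (catalanScaledSq 4 - 1) * C Polynomial.X ^ 2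

theorem isUnit_kernelFactor : IsUnit kernelFactor := by
  simp [PowerSeries.isUnit_iff_constantCoeff, kernelFactor, constantCoeff_catalanScaledSq]

theorem evalT_kernelFactor_mul_evalTInv :
    evalT kernelFactor * evalTInv kernelFactor =
      catalanScaledSq 4 ^ 2 * (1 - 4 * stepWeight ℂ ^ 2) := by
  have huv : (C (LaurentPolynomial.T 1) * C (LaurentPolynomial.T (-1)) : ℂ[T;T⁻¹]⟦X⟧) = 1 := by
    rw [← map_mul, ← LaurentPolynomial.T_add, add_neg_cancel, LaurentPolynomial.T_zero, map_one]
  rw [stepWeight, map_add, one_sub_four_mul_sq_factorization catalanScaledSq_four_eq huv,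
    kernelFactor]
  simp only [map_sub, map_mul, map_pow, map_one, evalT_catalanScaledSq_four,
    evalTInv_catalanScaledSq_four]
  simp [evalTInv, evalT, invertT]

/-- The part of `rowGF j` that counts the walks with nonnegative final abscissa. -/
noncomputable def halfRowGF (j : ℤ) : ℂ[X]⟦X⟧ := nonnegPart (rowGF j)

theorem evalT_halfRowGF_zero : evalT (halfRowGF 0) = rowGF 0 :=
  evalT_nonnegPart fun i hi ↦ by rw [xCoeff_rowGF, walkGF_zero_of_neg hi]

theorem exists_evalTInv_eq_axisDefect :
    ∃ N, evalTInv N = axisDefect ∧ halfRowGF 0 ^ 2 * kernelFactor = 1 ∧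
      N ^ 2 * catalanScaledSq 4 ^ 2 = kernelFactor := by
  obtain ⟨N, hN⟩ := exists_evalTInv_eq fun i hi ↦ xCoeff_axisDefect_of_pos hi
  refine ⟨N, hN, ?_⟩
  apply wienerHopf_factor_unique isUnit_kernelFactor
  · rw [evalT_kernelFactor_mul_evalTInv, map_pow, evalT_halfRowGF_zero, map_mul, map_pow, map_pow,
      hN, ← rowGF_zero_sq_mul, evalTInv_catalanScaledSq_four]
    ring
  · have hF : PowerSeries.map Polynomial.constantCoeff (halfRowGF 0) = 1 := by
      rw [map_constantCoeff_eq_xCoeff_evalT, evalT_halfRowGF_zero, xCoeff_rowGF, walkGF_zero_zero]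
    simp [hF, kernelFactor]

theorem halfRowGF_zero_sq_mul_kernelFactor : halfRowGF 0 ^ 2 * kernelFactor = 1 :=
  let ⟨_, _, h, _⟩ := exists_evalTInv_eq_axisDefect
  h

theorem one_sub_walkGF_sq_mul :
    (1 - 2 * X * (walkGF (-1) 1 + walkGF 1 1)) ^ 2 * catalanScaledSq (4 : ℂ) ^ 2 = 1 := by
  obtain ⟨N, hN, -, hfactor⟩ := exists_evalTInv_eq_axisDefect
  have hN₀ : PowerSeries.map Polynomial.constantCoeff N =
      1 - 2 * X * (walkGF (-1) 1 + walkGF 1 1) := by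
    rw [map_constantCoeff_eq_xCoeff_evalTInv, hN, xCoeff_axisDefect, walkGF_zero_zero, zero_sub,
      zero_add]
  rw [← hN₀]
  simpa [kernelFactor, map_catalanScaledSq] using
    congrArg (PowerSeries.map Polynomial.constantCoeff) hfactor

theorem walkGF_neg_one_one_add_walkGF_one_one :
    walkGF (-1) 1 + walkGF 1 1 = 2 * X * catalanScaledSq 4 := by
  have hone : (1 - 2 * X * (walkGF (-1) 1 + walkGF 1 1)) * catalanScaledSq (4 : ℂ) = 1 := by
    apply eq_of_sq_eq_sq_of_constantCoeff_eq_one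
    · rw [mul_pow, one_sub_walkGF_sq_mul, one_pow]
    · simp [constantCoeff_catalanScaledSq]
    · exact map_one _
  apply mul_left_cancel₀ (two_mul_X_ne_zero (R := ℂ))
  linear_combination (1 - 2 * X * (walkGF (-1) 1 + walkGF 1 1)) * catalanScaledSq_four_eq (R := ℂ)
    + (4 * X ^ 2 * catalanScaledSq 4 - 1) * hone

theorem C_X_mul_halfRowGF_zero :
    C Polynomial.X * halfRowGF 0 =
      C Polynomial.X * PowerSeries.map Polynomial.C (1 - 2 * X * walkGF 1 1)
        + (C Polynomial.X ^ 2 + 1) * (2 * X * halfRowGF 1) := by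
  have hdefect := nonnegPart_eq_map_C fun i hi ↦ xCoeff_axisDefect_of_pos hi
  have hstep := C_X_mul_nonnegPart_stepWeight_mul (rowGF 1)
  rw [xCoeff_axisDefect, axisDefect, mul_assoc, two_mul, map_sub, map_add] at hdefect
  rw [xCoeff_rowGF, xCoeff_rowGF, walkGF_eq_zero_of_odd (i := 0) (j := 1) (by decide)] at hstep
  simp only [walkGF_zero_zero, zero_sub, zero_add, map_sub, map_mul, map_add, map_one, map_ofNat,
    PowerSeries.map_X, map_zero] at hdefect hstep ⊢
  rw [halfRowGF, halfRowGF]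
  linear_combination C Polynomial.X * hdefect + 2 * hstep

theorem C_X_mul_halfRowGF_one :
    C Polynomial.X * halfRowGF 1 =
      X * ((C Polynomial.X ^ 2 + 1) * (halfRowGF 0 + halfRowGF 2)
        - PowerSeries.map Polynomial.C (1 + walkGF 0 2)) := by
  have hstep := C_X_mul_nonnegPart_stepWeight_mul (rowGF 0 + rowGF 2)
  rw [← show rowGF 1 = stepWeight ℂ * (rowGF 0 + rowGF 2) from rowGF_eq one_ne_zero] at hstep
  simp only [map_add, xCoeff_rowGF, walkGF_zero_zero,
    walkGF_eq_zero_of_odd (i := -1) (j := 0) (by decide),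
    walkGF_eq_zero_of_odd (i := -1) (j := 2) (by decide), map_zero, add_zero, mul_zero] at hstep
  simpa only [halfRowGF, map_add] using hstep

end Kernel

section Evaluation

/-- The substitution `x ↦ i` of a root of `x + x⁻¹`, at which the kernel `1 - 4t²(x + x⁻¹)²`
does not depend on `t`. -/
noncomputable def evalI : ℂ[X]⟦X⟧ →+* ℂ⟦X⟧ := PowerSeries.map (Polynomial.evalRingHom Complex.I)

theorem evalI_X : evalI X = X := PowerSeries.map_X _

theorem evalI_map_C (f : ℂ⟦X⟧) : evalI (PowerSeries.map Polynomial.C f) = f := by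
  ext n
  simp [evalI]

theorem evalI_C_X_sq : evalI (C Polynomial.X) ^ 2 = -1 := by
  rw [evalI, PowerSeries.map_C, Polynomial.coe_evalRingHom, Polynomial.eval_X, ← map_pow,
    Complex.I_sq, map_neg, map_one]

theorem evalI_C_X_ne_zero : evalI (C Polynomial.X) ≠ 0 := by
  simp [evalI]

theorem evalI_catalanScaledSq_four : evalI (catalanScaledSq 4) = catalanScaledSq 4 := by
  rw [evalI, map_catalanScaledSq, map_ofNat]

theorem evalI_kernelFactor : evalI kernelFactor = catalanScaledSq 4 := by
  rw [kernelFactor, map_sub, map_mul, map_pow, evalI_C_X_sq, map_sub, evalI_catalanScaledSq_four,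
    map_one]
  ring

theorem evalI_halfRowGF_zero : evalI (halfRowGF 0) = 1 - 2 * X * walkGF 1 1 := by
  have h := congrArg evalI C_X_mul_halfRowGF_zero
  simp only [map_mul, map_add evalI, map_pow, map_one evalI, evalI_map_C, evalI_C_X_sq] at h
  apply mul_left_cancel₀ evalI_C_X_ne_zero
  linear_combination h

theorem one_sub_walkGF_one_one_sq_mul :
    (1 - 2 * X * walkGF 1 1) ^ 2 * catalanScaledSq 4 = 1 := by
  rw [← evalI_halfRowGF_zero, ← evalI_kernelFactor, ← map_pow, ← map_mul,
    halfRowGF_zero_sq_mul_kernelFactor, map_one]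

theorem one_sub_walkGF_one_one_mul_evenCatalan :
    (1 - 2 * X * walkGF 1 1) * evenCatalan ℂ = 1 := by
  apply eq_of_sq_eq_sq_of_constantCoeff_eq_one
  · rw [mul_pow, evenCatalan_sq, one_sub_walkGF_one_one_sq_mul, one_pow]
  · simp [constantCoeff_evenCatalan]
  · exact map_one _

theorem walkGF_one_one : walkGF 1 1 = oddCatalan ℂ := by
  apply mul_left_cancel₀ (two_mul_X_ne_zero (R := ℂ))
  linear_combination (1 - 2 * X * walkGF 1 1) * evenCatalan_mul_one_sub (R := ℂ)
    - (1 - 2 * X * oddCatalan ℂ) * one_sub_walkGF_one_one_mul_evenCatalan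

theorem evalI_halfRowGF_one :
    evalI (C Polynomial.X) * evalI (halfRowGF 1) = -(X * (1 + walkGF 0 2)) := by
  have h := congrArg evalI C_X_mul_halfRowGF_one
  simp only [map_mul, map_add evalI, map_sub evalI, map_pow, map_one evalI, evalI_map_C,
    evalI_C_X_sq, evalI_X] at h
  linear_combination h

-- Compares `A_0² (1 - (d - 1) x²) = 1` with its value at `x² = -1` and divides by `x² + 1`.
theorem halfRowGF_one_mul_kernelFactor :
    C Polynomial.X ^ 2 * PowerSeries.map Polynomial.C (1 - 2 * X * walkGF 1 1) ^ 2 *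
        (catalanScaledSq 4 - 1) =
      (2 * C Polynomial.X * PowerSeries.map Polynomial.C (1 - 2 * X * walkGF 1 1)
          + (C Polynomial.X ^ 2 + 1) * (2 * X * halfRowGF 1)) *
        (2 * X * halfRowGF 1) * kernelFactor := by
  have hrow := C_X_mul_halfRowGF_zero
  have hkernel := halfRowGF_zero_sq_mul_kernelFactor
  have hone := congrArg (PowerSeries.map Polynomial.C) one_sub_walkGF_one_one_sq_mul
  rw [map_mul, map_pow, map_catalanScaledSq, map_ofNat, map_one] at hone
  have hne : (C Polynomial.X ^ 2 + 1 : ℂ[X]⟦X⟧) ≠ 0 := fun h ↦ by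
    simpa using congrArg (Polynomial.eval 0 <| PowerSeries.constantCoeff ·) h
  generalize PowerSeries.map Polynomial.C (1 - 2 * X * walkGF 1 1) = ε at *
  generalize 2 * X * halfRowGF 1 = r at *
  apply mul_left_cancel₀ hne
  rw [kernelFactor] at *
  linear_combination
    (1 - (catalanScaledSq 4 - 1) * C Polynomial.X ^ 2) *
        (C Polynomial.X * halfRowGF 0 + C Polynomial.X * ε + (C Polynomial.X ^ 2 + 1) * r) * hrow
      - C Polynomial.X ^ 2 * hkernel + C Polynomial.X ^ 2 * hone

theorem one_add_walkGF_zero_two : 1 + walkGF 0 2 = evenCatalan ℂ := by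
  have hd := catalanScaledSq_four_eq (R := ℂ)
  have hsq := one_sub_walkGF_one_one_sq_mul
  have hone := one_sub_walkGF_one_one_mul_evenCatalan
  have heval := congrArg evalI halfRowGF_one_mul_kernelFactor
  simp only [map_mul, map_add evalI, map_sub evalI, map_pow, map_one evalI, map_ofNat, evalI_map_C,
    evalI_C_X_sq, evalI_X, evalI_kernelFactor, evalI_catalanScaledSq_four] at heval
  generalize 1 - 2 * X * walkGF 1 1 = ε at *
  have hlin : ε * (catalanScaledSq 4 - 1) = 4 * X ^ 2 * (1 + walkGF 0 2) * catalanScaledSq 4 := by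
    linear_combination
      -evenCatalan ℂ * (heval + 4 * X * ε * catalanScaledSq 4 * evalI_halfRowGF_one)
        - (ε * (catalanScaledSq 4 - 1) - 4 * X ^ 2 * (1 + walkGF 0 2) * catalanScaledSq 4) * hone
  apply mul_left_cancel₀ (pow_ne_zero 2 (two_mul_X_ne_zero (R := ℂ)))
  linear_combination -ε ^ 2 * hlin + ε ^ 3 * hd
    + 4 * X ^ 2 * (ε * catalanScaledSq 4 - 1 - walkGF 0 2) * hsq
    + 4 * X ^ 2 * evenCatalan ℂ * hone - 4 * X ^ 2 * ε * evenCatalan_sq (R := ℂ)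

end Evaluation

/-- for walks with diagonal steps,
`a_{1,1}(2n+1) = C_{2n+1}`, `a_{-1,1}(2n+1) = 2·4ⁿ·Cₙ − C_{2n+1}`
(stated additively to stay in ℕ), and `a_{0,2}(2n) = C_{2n}` for `n ≥ 1`. -/
theorem diag_slit_count_endpoints :
    (∀ n : ℕ, slitCount diagSteps 1 1 (2 * n + 1) = catalan (2 * n + 1))
    ∧ (∀ n : ℕ,
        slitCount diagSteps (-1) 1 (2 * n + 1) + catalan (2 * n + 1) = 2 * 4 ^ n * catalan n)
    ∧ (∀ n : ℕ, 1 ≤ n → slitCount diagSteps 0 2 (2 * n) = catalan (2 * n)) := by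
  have hone (n : ℕ) : (slitCount diagSteps 1 1 (2 * n + 1) : ℂ) = catalan (2 * n + 1) := by
    rw [← coeff_walkGF, walkGF_one_one]
    simp [oddCatalan]
  refine ⟨fun n ↦ mod_cast hone n, fun n ↦ ?_, fun n hn ↦ ?_⟩
  · have h := congrArg (coeff (2 * n + 1)) walkGF_neg_one_one_add_walkGF_one_one
    rw [map_add, coeff_walkGF, coeff_walkGF, hone, mul_right_comm, PowerSeries.coeff_succ_mul_X,
      two_mul (catalanScaledSq 4), map_add, coeff_two_mul_catalanScaledSq, ← two_mul,
      ← mul_assoc] at h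
    exact_mod_cast h
  · have h := congrArg (coeff (2 * n)) one_add_walkGF_zero_two
    rw [map_add, coeff_walkGF, PowerSeries.coeff_one, if_neg (by omega), zero_add] at h
    simpa [evenCatalan] using h
end
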